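/- arXiv:1907.07436 — 2 statements merged into one kernel-verified Lean document; each statement's English description precedes it below -/
import Mathlib

section
/- Let Ω ⊆ ℝⁿ be open and bounded, A ⊆ ℝᵐ nonempty and compact, and f : Ω × A → ℝⁿ continuous, uniformly Lipschitz in the first variable, with f(x,A) convex and −f(x,A) ⊆ f(x,A) for every x; set H(x,p) = max_{a∈A}(−f(x,a)·p) and assume H_p exists and is continuous at every (x,p) with H(x,p) > 0. Let U ∈ C¹(Ω) ∩ C(cl Ω) be a C¹-solution of the Aronsson equation on {x ∈ Ω : H(x,∇U(x)) > 0}. Then for every k ∈ ℝ and every W ∈ C(cl Ω) which is a viscosity subsolution of H(x,∇W(x)) ≤ k in Ω and satisfies W = U on ∂Ω, one has H(x,∇U(x)) ≤ k for all x ∈ Ω. -/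
open Set
open scoped RealInnerProductSpace

/-!
Write `V x = H(x, ∇U(x))` and let `D⁺` be the superdifferential. By the envelope theorem
`H_p(x, ∇U(x)) = f(x, a)` for an `a` with `f(x, a) · ∇U(x) = V x`, so the Aronsson equation says
that `D⁺V(x)` is orthogonal to `f(x, a)` wherever `V > 0`.

Suppose `k < k₀ < V(x₀)`. On `{V > k₀}` doubling of variables gives `W ≤ U`: the penalization
`N |z - w|²` of `W(z) - U(z)` comes with a barrier `-κ / (V(w) - k₀)`, so that its gradient at `w`
is a positive multiple of an element of `D⁺V(w)` and is orthogonal to `f(w, a)`, while `f(z, a)`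
differs from `f(w, a)` by `O(|z - w|)`. Monotonicity along the integral curves of `f(·, a)` and the
symmetry of `f(x, A)` show that `-W` is a subsolution too, so the same argument for `-U`, `-W`
yields `U ≤ W`. Hence `W = U` near `x₀`, and `V(x₀) ≤ k` after all.
-/

open Filter Topology Metric Function
open scoped NNReal

section Superdifferential

variable {E : Type*} [NormedAddCommGroup E] [NormedSpace ℝ E] {u v φ : E → ℝ} {x : E}
  {p : E →L[ℝ] ℝ}

/-- The superdifferential `D⁺u(x)` of viscosity theory: the differentials at `x` of the test
functions which are `C¹` near `x` and touch `u` from above at `x` up to an additive constant. -/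
def superdifferential (u : E → ℝ) (x : E) : Set (E →L[ℝ] ℝ) :=
  {p | ∃ φ : E → ℝ, ContDiffAt ℝ 1 φ x ∧ IsLocalMax (fun y => u y - φ y) x ∧ fderiv ℝ φ x = p}

lemma fderiv_mem_superdifferential (hφ : ContDiffAt ℝ 1 φ x)
    (hmax : IsLocalMax (fun y => u y - φ y) x) : fderiv ℝ φ x ∈ superdifferential u x :=
  ⟨φ, hφ, hmax, rfl⟩

lemma fderiv_add_mem_superdifferential (hv : ContDiffAt ℝ 1 v x)
    (hp : p ∈ superdifferential (fun y => u y - v y) x) :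
    fderiv ℝ v x + p ∈ superdifferential u x := by
  obtain ⟨φ, hφ, hmax, rfl⟩ := hp
  rw [← fderiv_fun_add (hv.differentiableAt one_ne_zero) (hφ.differentiableAt one_ne_zero)]
  exact fderiv_mem_superdifferential (hv.add hφ) (by simpa only [sub_sub] using hmax)

lemma deriv_smul_mem_superdifferential_comp {θ : ℝ → ℝ} {s : Set ℝ} (hθ : ContDiffAt ℝ 1 θ (u x))
    (hs : s ∈ 𝓝 (u x)) (hmono : MonotoneOn θ s) (hu : ContinuousAt u x)
    (hp : p ∈ superdifferential u x) :
    deriv θ (u x) • p ∈ superdifferential (fun y => θ (u y)) x := by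
  obtain ⟨φ, hφ, hmax, rfl⟩ := hp
  set ψ : E → ℝ := fun y => φ y + (u x - φ x)
  have hψx : ψ x = u x := add_sub_cancel _ _
  have hψ : ContDiffAt ℝ 1 ψ x := hφ.add contDiffAt_const
  have hψ' : HasFDerivAt ψ (fderiv ℝ φ x) x :=
    (hφ.differentiableAt one_ne_zero).hasFDerivAt.add_const _
  rw [← hψx] at hθ
  have hcomp : HasFDerivAt (θ ∘ ψ) (deriv θ (u x) • fderiv ℝ φ x) x :=
    hψx ▸ (hθ.differentiableAt one_ne_zero).hasDerivAt.comp_hasFDerivAt x hψ'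
  refine ⟨θ ∘ ψ, hθ.comp x hψ, ?_, hcomp.fderiv⟩
  have hψs : ∀ᶠ y in 𝓝 x, ψ y ∈ s := hψ.continuousAt (hψx ▸ hs)
  filter_upwards [hmax, hu hs, hψs] with y hy hus hψs
  have : u y ≤ ψ y := by linarith
  simpa only [comp_apply, hψx, sub_self, sub_nonpos] using hmono hus hψs this

lemma exists_contDiff_eventuallyEq [HasContDiffBump E] (hφ : ContDiffAt ℝ 1 φ x) :
    ∃ ψ : E → ℝ, ContDiff ℝ 1 ψ ∧ ψ =ᶠ[𝓝 x] φ := by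
  obtain ⟨r, hr, hball⟩ := eventually_nhds_iff_ball.1 (hφ.eventually (by simp))
  let χ : ContDiffBump x := ⟨r / 4, r / 2, by positivity, by linarith⟩
  refine ⟨fun y => χ y * φ y, contDiff_iff_contDiffAt.2 fun y => ?_, ?_⟩
  · by_cases hy : y ∈ ball x r
    · exact χ.contDiffAt.mul (hball y hy)
    · have hy' : y ∈ (closedBall x (r / 2))ᶜ := fun h => hy (closedBall_subset_ball (by linarith) h)
      refine (contDiffAt_const (c := (0 : ℝ))).congr_of_eventuallyEq ?_
      filter_upwards [isClosed_closedBall.isOpen_compl.mem_nhds hy'] with w hw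
      have hw' : r / 2 < dist w x := by simpa using hw
      rw [χ.zero_of_le_dist hw'.le, zero_mul]
  · filter_upwards [χ.eventuallyEq_one] with y hy
    rw [hy, Pi.one_apply, one_mul]

lemma mem_superdifferential_iff_exists_contDiff [HasContDiffBump E] :
    p ∈ superdifferential u x ↔
      ∃ φ : E → ℝ, ContDiff ℝ 1 φ ∧ IsLocalMax (fun y => u y - φ y) x ∧ fderiv ℝ φ x = p := by
  refine ⟨?_, fun ⟨φ, hφ, hmax, hp⟩ => ⟨φ, hφ.contDiffAt, hmax, hp⟩⟩
  rintro ⟨φ, hφ, hmax, rfl⟩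
  obtain ⟨ψ, hψ, heq⟩ := exists_contDiff_eventuallyEq hφ
  exact ⟨ψ, hψ, hmax.congr (heq.mono fun y hy => by simp only [hy]), heq.fderiv_eq⟩

lemma exists_pos_smul_mem_superdifferential_of_neg_inv {δ c : ℝ} (hδ : 0 < δ)
    (hu : ContinuousAt u x) (hux : c < u x)
    (hp : p ∈ superdifferential (fun y => -(δ * (u y - c)⁻¹)) x) :
    ∃ a : ℝ, 0 < a ∧ a • p ∈ superdifferential u x := by
  set e : ℝ := -(δ * (u x - c)⁻¹)
  have he : e < 0 := neg_neg_of_pos (mul_pos hδ (inv_pos.2 (sub_pos.2 hux)))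
  have hderiv : HasDerivAt (fun t => c - δ * t⁻¹) (-(δ * -(e ^ 2)⁻¹)) e :=
    ((hasDerivAt_inv he.ne).const_mul δ).const_sub c
  have hdiff : ContDiffAt ℝ 1 (fun t => c - δ * t⁻¹) e :=
    contDiffAt_const.sub (contDiffAt_const.mul (contDiffAt_inv ℝ he.ne))
  have hmono : MonotoneOn (fun t => c - δ * t⁻¹) (Iio 0) := fun a ha b hb hab =>
    sub_le_sub_left (mul_le_mul_of_nonneg_left ((inv_le_inv_of_neg hb ha).2 hab) hδ.le) c
  have hcont : ContinuousAt (fun y => -(δ * (u y - c)⁻¹)) x :=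
    (continuousAt_const.mul ((hu.sub continuousAt_const).inv₀ (sub_pos.2 hux).ne')).neg
  have hinv (y : E) : c - δ * (-(δ * (u y - c)⁻¹))⁻¹ = u y := by field_simp; ring
  refine ⟨-(δ * -(e ^ 2)⁻¹), ?_, ?_⟩
  · rw [mul_neg, neg_neg]
    exact mul_pos hδ (inv_pos.2 (sq_pos_of_neg he))
  · have h := deriv_smul_mem_superdifferential_comp (u := fun y => -(δ * (u y - c)⁻¹)) hdiff
      (Iio_mem_nhds he) hmono hcont hp
    rw [hderiv.deriv] at h
    simpa only [hinv] using h

end Superdifferential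

section Penalization

variable {X T : Type*} [PseudoMetricSpace X] [TopologicalSpace T] {C : Set X} {D : Set T}
  {u : X → ℝ} {v : T → ℝ} {π : T → X}

lemma exists_max_sub_mul_dist_sq (hC : IsCompact C) (hD : IsCompact D) (hne : D.Nonempty)
    (hu : ContinuousOn u C) (hv : ContinuousOn v D) (hπ : ContinuousOn π D)
    (hmaps : MapsTo π D C) (N : ℝ) :
    ∃ z ∈ C, ∃ t ∈ D,
      (∀ y ∈ C, ∀ s ∈ D, u y + v s - N * dist y (π s) ^ 2 ≤ u z + v t - N * dist z (π t) ^ 2) ∧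
      N * dist z (π t) ^ 2 ≤ u z - u (π t) := by
  obtain ⟨t₀, ht₀⟩ := hne
  have hu' : ContinuousOn (fun q : X × T => u q.1) (C ×ˢ D) :=
    hu.comp continuousOn_fst fun q hq => hq.1
  have hv' : ContinuousOn (fun q : X × T => v q.2) (C ×ˢ D) :=
    hv.comp continuousOn_snd fun q hq => hq.2
  have hπ' : ContinuousOn (fun q : X × T => π q.2) (C ×ˢ D) :=
    hπ.comp continuousOn_snd fun q hq => hq.2
  have hdist : ContinuousOn (fun q : X × T => dist q.1 (π q.2)) (C ×ˢ D) :=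
    continuous_dist.comp_continuousOn (continuousOn_fst.prodMk hπ')
  obtain ⟨⟨z, t⟩, ⟨hz, ht⟩, hmax⟩ := (hC.prod hD).exists_isMaxOn
    ⟨(π t₀, t₀), hmaps ht₀, ht₀⟩ ((hu'.add hv').sub (continuousOn_const.mul (hdist.pow 2)))
  have hmax' : ∀ y ∈ C, ∀ s ∈ D,
      u y + v s - N * dist y (π s) ^ 2 ≤ u z + v t - N * dist z (π t) ^ 2 :=
    fun y hy s hs => hmax (mk_mem_prod hy hs)
  refine ⟨z, hz, t, ht, hmax', ?_⟩
  have h := hmax' _ (hmaps ht) t ht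
  rw [dist_self] at h
  linarith

lemma exists_max_sub_mul_dist_sq_of_pos {δ ε : ℝ} (hC : IsCompact C) (hD : IsCompact D)
    (hne : D.Nonempty) (hu : ContinuousOn u C) (hv : ContinuousOn v D) (hπ : ContinuousOn π D)
    (hmaps : MapsTo π D C) (hδ : 0 < δ) (hε : 0 < ε) :
    ∃ N > 0, ∃ z ∈ C, ∃ t ∈ D,
      (∀ y ∈ C, ∀ s ∈ D, u y + v s - N * dist y (π s) ^ 2 ≤ u z + v t - N * dist z (π t) ^ 2) ∧
      dist z (π t) < δ ∧ u z - u (π t) < ε ∧ N * dist z (π t) ^ 2 < ε := by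
  obtain ⟨B, hB⟩ := hC.exists_bound_of_continuousOn hu
  obtain ⟨η, hη, huη⟩ := uniformContinuousOn_iff.1
    (hC.uniformContinuousOn_of_continuous hu) ε hε
  have hB₀ : 0 ≤ B := (norm_nonneg _).trans (hB _ (hmaps hne.some_mem))
  set r := min δ η
  have hr : 0 < r := lt_min hδ hη
  set N := (2 * B + 1) / r ^ 2
  have hN : 0 < N := by positivity
  have hNr : N * r ^ 2 = 2 * B + 1 := div_mul_cancel₀ _ (by positivity)
  obtain ⟨z, hz, t, ht, hmax, hpen⟩ := exists_max_sub_mul_dist_sq hC hD hne hu hv hπ hmaps N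
  have hdist : dist z (π t) < r := by
    have h₁ := abs_le.1 (hB z hz)
    have h₂ := abs_le.1 (hB _ (hmaps ht))
    refine lt_of_pow_lt_pow_left₀ 2 hr.le (lt_of_mul_lt_mul_left ?_ hN.le)
    linarith
  have hosc : u z - u (π t) < ε :=
    lt_of_abs_lt (huη z hz _ (hmaps ht) (hdist.trans_le (min_le_right _ _)))
  exact ⟨N, hN, z, hz, t, ht, hmax, hdist.trans_le (min_le_left _ _), hosc,
    hpen.trans_lt hosc⟩

end Penalization

section QuadraticTestFunctions

variable {E : Type*} [NormedAddCommGroup E] [InnerProductSpace ℝ E] {u : E → ℝ} {N : ℝ} {z w : E}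

lemma hasFDerivAt_mul_dist_sq (N : ℝ) (z w : E) :
    HasFDerivAt (fun y => N * dist y w ^ 2) ((2 * N) • innerSL ℝ (z - w)) z := by
  have h := (((hasFDerivAt_id (𝕜 := ℝ) z).sub_const w).norm_sq).const_mul N
  simp only [dist_eq_norm]
  refine h.congr_fderiv (ContinuousLinearMap.ext fun y => ?_)
  simp only [id_eq, map_sub, ContinuousLinearMap.comp_id, smul_apply, sub_apply,
    coe_innerSL_apply, nsmul_eq_mul, Nat.cast_ofNat, smul_eq_mul]
  ring

lemma smul_innerSL_mem_superdifferential
    (hmax : IsLocalMax (fun y => u y - N * dist y w ^ 2) z) :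
    (2 * N) • innerSL ℝ (z - w) ∈ superdifferential u z := by
  refine ⟨_, ?_, hmax, (hasFDerivAt_mul_dist_sq N z w).fderiv⟩
  simp only [dist_eq_norm]
  exact contDiffAt_const.mul ((contDiffAt_id.sub contDiffAt_const).norm_sq ℝ)

lemma abs_inner_sub_sub_le_of_lipschitzOnWith {K : ℝ≥0} {b : E → E} {s : Set E}
    (hb : LipschitzOnWith K b s) (hz : z ∈ s) (hw : w ∈ s) :
    |⟪z - w, b z - b w⟫| ≤ K * dist z w ^ 2 :=
  calc |⟪z - w, b z - b w⟫| ≤ ‖z - w‖ * ‖b z - b w‖ := abs_real_inner_le_norm _ _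
    _ = dist z w * dist (b z) (b w) := by simp only [dist_eq_norm]
    _ ≤ dist z w * (K * dist z w) := by gcongr; exact hb.dist_le_mul _ hz _ hw
    _ = K * dist z w ^ 2 := by ring

lemma neg_mul_dist_sq_le_inner_of_lipschitzOnWith {K : ℝ≥0} {b : E → E} {s : Set E}
    (hb : LipschitzOnWith K b s) (hz : z ∈ s) (hw : w ∈ s) (hbw : 0 ≤ ⟪z - w, b w⟫) :
    -(K * dist z w ^ 2) ≤ ⟪z - w, b z⟫ := by
  have h := (abs_le.1 (abs_inner_sub_sub_le_of_lipschitzOnWith hb hz hw)).1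
  rw [inner_sub_right] at h
  linarith

lemma exists_superdifferential_nonempty [ProperSpace E] {Ω : Set E} (hΩ : IsOpen Ω)
    (hne : Ω.Nonempty) (hu : ContinuousOn u Ω) : ∃ x ∈ Ω, (superdifferential u x).Nonempty := by
  obtain ⟨x₀, hx₀⟩ := hne
  obtain ⟨r, hr, hrΩ⟩ := nhds_basis_closedBall.mem_iff.1 (hΩ.mem_nhds hx₀)
  obtain ⟨N, -, z, hz, w, rfl, hmax, hzw, -⟩ := exists_max_sub_mul_dist_sq_of_pos (π := id)
    (isCompact_closedBall x₀ r) isCompact_singleton (singleton_nonempty x₀) (hu.mono hrΩ)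
    (v := 0) continuousOn_const continuousOn_id
    (singleton_subset_iff.2 (mem_closedBall_self hr.le)) hr one_pos
  refine ⟨z, hrΩ hz, _, smul_innerSL_mem_superdifferential (N := N) (w := w) ?_⟩
  filter_upwards [isOpen_ball.mem_nhds hzw] with y hy
  simpa using hmax y (ball_subset_closedBall hy) w rfl

end QuadraticTestFunctions

section IntegralCurves

lemma sub_mul_nonpos_of_isLocalMaxOn {h : ℝ → ℝ} {h' τ σ : ℝ} {S : Set ℝ} (hS : Convex ℝ S)
    (hτ : τ ∈ S) (hσ : σ ∈ S) (hh : HasDerivWithinAt h h' S τ) (hmax : IsLocalMaxOn h S τ) :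
    (σ - τ) * h' ≤ 0 := by
  simpa using hmax.hasFDerivWithinAt_nonpos hh.hasFDerivWithinAt
    (sub_mem_posTangentConeAt_of_segment_subset (hS.segment_subset hτ hσ))

variable {E : Type*} [NormedAddCommGroup E] [InnerProductSpace ℝ E] [ProperSpace E] {Ω : Set E}
  {u : E → ℝ} {b : E → E} {K : ℝ≥0} {c c' s t : ℝ} {γ : ℝ → E} {x : E}

-- `u` is not differentiable along `γ`, so the maximum of `u (γ τ) - c' * τ` is replaced by that of
-- `u y - c' * τ - N * dist y (γ τ) ^ 2`, whose `y`-derivative lies in the superdifferential of `u`.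
lemma exists_superdifferential_of_lt_sub_along (hΩ : IsOpen Ω) (hu : ContinuousOn u Ω)
    (hst : s ≤ t) (hγ : IsIntegralCurveOn γ (fun _ => b) (Icc s t)) (hγΩ : MapsTo γ (Icc s t) Ω)
    (hlt : c' * (t - s) < u (γ t) - u (γ s)) {ε : ℝ} (hε : 0 < ε) :
    ∃ N > 0, ∃ y ∈ Ω, ∃ w ∈ Ω, N * dist y w ^ 2 < ε ∧
      (2 * N) • innerSL ℝ (y - w) ∈ superdifferential u y ∧ c' ≤ 2 * N * ⟪y - w, b w⟫ := by
  have hγc : ContinuousOn γ (Icc s t) := hγ.continuousOn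
  have hKc : IsCompact (γ '' Icc s t) := isCompact_Icc.image_of_continuousOn hγc
  obtain ⟨r, hr, hrΩ⟩ := hKc.exists_cthickening_subset_open hΩ hγΩ.image_subset
  have hv : ContinuousOn (fun τ => -(c' * τ)) (Icc s t) := by fun_prop
  obtain ⟨N, hN, y, hy, τ, hτ, hmax, hyr, hosc, hpen⟩ := exists_max_sub_mul_dist_sq_of_pos
    hKc.cthickening isCompact_Icc (nonempty_Icc.2 hst) (hu.mono hrΩ) hv hγc
    (fun τ hτ => self_subset_cthickening _ (mem_image_of_mem γ hτ)) hr
    (lt_min hε (sub_pos.2 hlt))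
  have hτs : s < τ := by
    refine hτ.1.lt_of_ne ?_
    rintro rfl
    have h := hmax _ (self_subset_cthickening _ (mem_image_of_mem γ (right_mem_Icc.2 hst))) t
      (right_mem_Icc.2 hst)
    have := hosc.trans_le (min_le_right _ _)
    rw [dist_self] at h
    nlinarith [mul_nonneg hN.le (sq_nonneg (dist y (γ s)))]
  refine ⟨N, hN, y, hrΩ hy, γ τ, hγΩ hτ, hpen.trans_le (min_le_left _ _),
    smul_innerSL_mem_superdifferential ?_, ?_⟩
  · filter_upwards [isOpen_ball.mem_nhds (mem_ball.2 hyr)] with y' hy'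
    have := hmax y' (thickening_subset_cthickening _ _
      (mem_thickening_iff.2 ⟨_, mem_image_of_mem γ hτ, hy'⟩)) τ hτ
    linarith
  · have hpenalty := (hasFDerivAt_mul_dist_sq N (γ τ) y).comp_hasDerivWithinAt τ (hγ τ hτ)
    have hderiv : HasDerivWithinAt (fun τ => -(c' * τ) - N * dist (γ τ) y ^ 2)
        (2 * N * ⟪y - γ τ, b (γ τ)⟫ - c') (Icc s t) τ := by
      refine (((hasDerivWithinAt_id τ _).const_mul c').neg.sub hpenalty).congr_deriv ?_
      rw [← neg_sub (γ τ) y, inner_neg_left, smul_apply, innerSL_apply_apply, smul_eq_mul]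
      ring
    have hmaxτ : IsMaxOn (fun τ => -(c' * τ) - N * dist (γ τ) y ^ 2) (Icc s t) τ :=
      fun τ' hτ' => by
        have h := hmax y hy τ' hτ'
        simp only [mem_ofPred_eq, dist_comm _ y]
        linarith
    have h := sub_mul_nonpos_of_isLocalMaxOn (convex_Icc s t) hτ (left_mem_Icc.2 hst) hderiv
      hmaxτ.localize
    exact sub_nonneg.1 (nonneg_of_mul_nonpos_right h (sub_neg.2 hτs))

lemma sub_le_mul_sub_along_of_lt (hΩ : IsOpen Ω) (hu : ContinuousOn u Ω)
    (hb : LipschitzOnWith K b Ω) (hbu : ∀ x ∈ Ω, ∀ p ∈ superdifferential u x, p (b x) ≤ c)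
    (hst : s ≤ t) (hγ : IsIntegralCurveOn γ (fun _ => b) (Icc s t)) (hγΩ : MapsTo γ (Icc s t) Ω)
    (hc : c < c') : u (γ t) - u (γ s) ≤ c' * (t - s) := by
  by_contra! hlt
  obtain ⟨ε, hε, hεc⟩ := exists_pos_mul_lt (sub_pos.2 hc) (2 * K)
  obtain ⟨N, hN, y, hy, w, hw, hpen, hp, hc'⟩ :=
    exists_superdifferential_of_lt_sub_along hΩ hu hst hγ hγΩ hlt hε
  have hc := hbu y hy _ hp
  rw [smul_apply, innerSL_apply_apply, smul_eq_mul] at hc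
  have hdiff : c' - c ≤ 2 * K * (N * dist y w ^ 2) :=
    calc c' - c ≤ 2 * N * -⟪y - w, b y - b w⟫ := by rw [inner_sub_right]; linarith
      _ ≤ 2 * N * (K * dist y w ^ 2) := by
        gcongr
        exact (neg_le_abs _).trans (abs_inner_sub_sub_le_of_lipschitzOnWith hb hy hw)
      _ = 2 * K * (N * dist y w ^ 2) := by ring
  have hsmall : 2 * K * (N * dist y w ^ 2) ≤ 2 * K * ε := by gcongr
  linarith

lemma sub_le_mul_sub_along_integralCurve (hΩ : IsOpen Ω) (hu : ContinuousOn u Ω)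
    (hb : LipschitzOnWith K b Ω) (hbu : ∀ x ∈ Ω, ∀ p ∈ superdifferential u x, p (b x) ≤ c)
    (hst : s ≤ t) (hγ : IsIntegralCurveOn γ (fun _ => b) (Icc s t))
    (hγΩ : MapsTo γ (Icc s t) Ω) : u (γ t) - u (γ s) ≤ c * (t - s) :=
  have hlim : Tendsto (fun c' => c' * (t - s)) (𝓝[>] c) (𝓝 (c * (t - s))) :=
    tendsto_nhdsWithin_of_tendsto_nhds (tendsto_id.mul_const _)
  ge_of_tendsto hlim (eventually_mem_nhdsWithin.mono fun _ hc =>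
    sub_le_mul_sub_along_of_lt hΩ hu hb hbu hst hγ hγΩ hc)

lemma exists_isIntegralCurveAt_of_lipschitzOnWith {F : Type*} [NormedAddCommGroup F]
    [NormedSpace ℝ F] [CompleteSpace F] {b : F → F} {x : F} {s : Set F}
    (hb : LipschitzOnWith K b s) (hs : s ∈ 𝓝 x) :
    ∃ γ : ℝ → F, γ 0 = x ∧ IsIntegralCurveAt γ (fun _ => b) 0 := by
  obtain ⟨r, hr, hrs⟩ := nhds_basis_closedBall.mem_iff.1 hs
  have hx : x ∈ closedBall x r := mem_closedBall_self hr.le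
  lift r to ℝ≥0 using hr.le
  set M : ℝ≥0 := ‖b x‖₊ + K * r + 1
  have hM : 0 < M := by positivity
  have hbM : ∀ y ∈ closedBall x r, ‖b y‖ ≤ M := fun y hy =>
    calc ‖b y‖ ≤ ‖b x‖ + ‖b y - b x‖ := norm_le_norm_add_norm_sub' _ _
      _ ≤ ‖b x‖ + K * r := by
        gcongr
        exact (hb.norm_sub_le (hrs hy) (hrs hx)).trans (by gcongr; rwa [← mem_closedBall_iff_norm])
      _ ≤ M := le_add_of_nonneg_right zero_le_one
  set ε : ℝ := r / M
  have hε : 0 < ε := div_pos hr (NNReal.coe_pos.2 hM)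
  have hMε : M * ε = r := mul_div_cancel₀ _ (NNReal.coe_ne_zero.2 hM.ne')
  have h0 : 0 ∈ Icc (-ε) ε := ⟨neg_nonpos.2 hε.le, hε.le⟩
  have hPL : IsPicardLindelof (fun _ => b) ⟨0, h0⟩ x r 0 M K :=
    .of_time_independent hbM (hb.mono hrs) (by simp [hMε])
  obtain ⟨γ, hγ₀, hγ⟩ := hPL.exists_eq_forall_mem_Icc_hasDerivWithinAt₀
  refine ⟨γ, hγ₀, ?_⟩
  filter_upwards [Ioo_mem_nhds (neg_lt_zero.2 hε) hε] with t ht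
  exact (hγ t (Ioo_subset_Icc_self ht)).hasDerivAt (Icc_mem_nhds ht.1 ht.2)

lemma neg_le_apply_of_mem_superdifferential_neg (hΩ : IsOpen Ω) (hu : ContinuousOn u Ω)
    (hb : LipschitzOnWith K b Ω) (hbu : ∀ x ∈ Ω, ∀ p ∈ superdifferential u x, p (b x) ≤ c)
    (hx : x ∈ Ω) {p : E →L[ℝ] ℝ} (hp : p ∈ superdifferential (fun y => -u y) x) :
    -c ≤ p (b x) := by
  obtain ⟨φ, hφ, hmax, rfl⟩ := hp
  obtain ⟨γ, rfl, hγ⟩ := exists_isIntegralCurveAt_of_lipschitzOnWith hb (hΩ.mem_nhds hx)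
  have hγΩ : ∀ᶠ t in 𝓝 0, γ t ∈ Ω := hγ.continuousAt (hΩ.mem_nhds hx)
  have hIcc : ∀ᶠ t in 𝓝[≥] (0 : ℝ), ∀ τ ∈ Icc 0 t, HasDerivAt γ (b (γ τ)) τ ∧ γ τ ∈ Ω :=
    (tendsto_const_nhds.Icc (tendsto_nhdsWithin_of_tendsto_nhds tendsto_id)).eventually
      (eventually_smallSets_forall.2 (hγ.and hγΩ))
  have hlocal : IsLocalMaxOn (fun t => -(φ (γ t)) - c * t) (Ici 0) 0 := by
    filter_upwards [hIcc, nhdsWithin_le_nhds (hγ.continuousAt hmax), self_mem_nhdsWithin]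
      with t ht hmax ht₀
    have h := sub_le_mul_sub_along_integralCurve hΩ hu hb hbu ht₀
      (fun τ hτ => (ht τ hτ).1.hasDerivWithinAt) fun τ hτ => (ht τ hτ).2
    simp only [mem_preimage, mem_ofPred_eq] at hmax
    linarith
  have hderiv : HasDerivAt (fun t => -(φ (γ t)) - c * t) (-(fderiv ℝ φ (γ 0) (b (γ 0))) - c) 0 := by
    have hφγ := (hφ.differentiableAt one_ne_zero).hasFDerivAt.comp_hasDerivAt 0 hγ.hasDerivAt
    exact (hφγ.neg.sub ((hasDerivAt_id 0).const_mul c)).congr_deriv (by rw [mul_one])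
  have h := sub_mul_nonpos_of_isLocalMaxOn (σ := 1) (convex_Ici 0) self_mem_Ici
    (mem_Ici.2 zero_le_one) hderiv.hasDerivWithinAt hlocal
  linarith

end IntegralCurves

section Superlevel

variable {X : Type*} [PseudoMetricSpace X] {Ω D : Set X} {g V : X → ℝ} {m v δ ε : ℝ} {x₀ : X}

lemma isCompact_sep_le_of_frontier_nonpos [ProperSpace X] (hΩ : IsOpen Ω)
    (hΩb : Bornology.IsBounded Ω) (hg : ContinuousOn g (closure Ω))
    (hgΩ : ∀ x ∈ frontier Ω, g x ≤ 0) (hm : 0 < m) : IsCompact {x ∈ Ω | m ≤ g x} := by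
  have heq : {x ∈ Ω | m ≤ g x} = closure Ω ∩ g ⁻¹' Ici m := by
    refine Subset.antisymm (inter_subset_inter_left _ subset_closure) fun x ⟨hx, hgx⟩ => ⟨?_, hgx⟩
    by_contra hxΩ
    exact (hm.trans_le hgx).not_ge (hgΩ x (hΩ.frontier_eq ▸ ⟨hx, hxΩ⟩))
  rw [heq]
  exact hΩb.isCompact_closure.of_isClosed_subset
    (hg.preimage_isClosed_of_isClosed isClosed_closure isClosed_Ici) inter_subset_left

lemma exists_mul_inv_sub_eq {t₀ d M : ℝ} (ht₀ : v < t₀) (hd : 0 < d) (hdM : d ≤ M) :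
    ∃ κ > 0, ∃ v' > v, v' ≤ t₀ ∧ κ * (t₀ - v)⁻¹ = d ∧
      ∀ t > v, κ * (t - v)⁻¹ < M → v' < t := by
  have hM : 0 < M := hd.trans_le hdM
  have ht : 0 < t₀ - v := sub_pos.2 ht₀
  refine ⟨d * (t₀ - v), mul_pos hd ht, v + d * (t₀ - v) / M, ?_, ?_,
    mul_inv_cancel_right₀ ht.ne' d, fun t ht' h => ?_⟩
  · exact lt_add_of_pos_right v (by positivity)
  · rw [← le_sub_iff_add_le', div_le_iff₀' hM]
    gcongr
  · rwa [← lt_sub_iff_add_lt', div_lt_comm₀ hM (sub_pos.2 ht'), div_eq_mul_inv]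

-- Since `κ * (V s - v)⁻¹` blows up as `V s ↓ v`, maximizing over `{v' ≤ V}` does not restrict `w`.
lemma exists_max_sub_inv_sub_mul_dist_sq (hD : IsCompact D) (hg : ContinuousOn g D)
    (hV : ContinuousOn V D) (hx₀ : x₀ ∈ D) (hgx₀ : m < g x₀) (hVx₀ : v < V x₀) (hδ : 0 < δ)
    (hε : 0 < ε) :
    ∃ κ > 0, ∃ v' > v, ∃ N > 0, ∃ z ∈ D, ∃ w ∈ D,
      m < g z ∧ m < g w ∧ v' < V w ∧ dist z w < δ ∧ N * dist z w ^ 2 < ε ∧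
      ∀ y ∈ D, ∀ s ∈ D, v' ≤ V s → g y + -(κ * (V s - v)⁻¹) - N * dist y s ^ 2 ≤
        g z + -(κ * (V w - v)⁻¹) - N * dist z w ^ 2 := by
  obtain ⟨B, hB⟩ := hD.exists_bound_of_continuousOn hg
  have hB₀ : 0 ≤ B := (norm_nonneg _).trans (hB x₀ hx₀)
  set d := (g x₀ - m) / 2 with hd
  have hd₀ : 0 < d := half_pos (sub_pos.2 hgx₀)
  obtain ⟨κ, hκ, v', hv', hx₀', hκd, hbarrier⟩ :=
    exists_mul_inv_sub_eq (M := 2 * B + 2 * d) hVx₀ hd₀ (by linarith)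
  set D' := D ∩ V ⁻¹' Ici v'
  have hVD' : ∀ x ∈ D', 0 < V x - v := fun x hx => sub_pos.2 (hv'.trans_le hx.2)
  have hD' : IsCompact D' := hV.upperSemicontinuousOn.isCompact_inter_preimage_Ici hD v'
  have hinv : ContinuousOn (fun x => -(κ * (V x - v)⁻¹)) D' :=
    (continuousOn_const.mul (((hV.mono inter_subset_left).sub continuousOn_const).inv₀
      fun x hx => (hVD' x hx).ne')).neg
  obtain ⟨N, hN, z, hz, w, hw, hmax, hzw, hosc, hpen⟩ := exists_max_sub_mul_dist_sq_of_pos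
    (π := id) hD hD' ⟨x₀, hx₀, hx₀'⟩ hg hinv continuousOn_id inter_subset_left hδ (lt_min hε hd₀)
  have hmax₀ := hmax x₀ hx₀ x₀ ⟨hx₀, hx₀'⟩
  simp only [id, dist_self, hκd] at hmax₀ hosc
  have hκw : 0 < κ * (V w - v)⁻¹ := mul_pos hκ (inv_pos.2 (hVD' w hw))
  have hNd : 0 ≤ N * dist z w ^ 2 := by positivity
  have hgz_le := (abs_le.1 (hB z hz)).2
  have hle_gx₀ := (abs_le.1 (hB x₀ hx₀)).1
  have hgzw := hosc.trans_le (min_le_right _ _)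
  exact ⟨κ, hκ, v', hv', N, hN, z, hz, w, hw.1, by linarith, by linarith,
    hbarrier _ (sub_pos.1 (hVD' w hw)) (by linarith), hzw, hpen.trans_le (min_le_left _ _),
    fun y hy s hs hVs => hmax y hy s ⟨hs, hVs⟩⟩

lemma exists_isLocalMax_sub_mul_dist_sq_pair (hΩ : IsOpen Ω) (hg : ContinuousOn g Ω)
    (hV : ContinuousOn V Ω) (hD : IsCompact {x ∈ Ω | m ≤ g x})
    (hx₀ : x₀ ∈ Ω) (hgx₀ : m < g x₀) (hVx₀ : v < V x₀) (hδ : 0 < δ) (hε : 0 < ε) :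
    ∃ κ > 0, ∃ N > 0, ∃ z ∈ {x ∈ Ω | m ≤ g x}, ∃ w ∈ {x ∈ Ω | m ≤ g x},
      v < V w ∧ dist z w < δ ∧ N * dist z w ^ 2 < ε ∧
      IsLocalMax (fun y => g y - N * dist y w ^ 2) z ∧
      IsLocalMax (fun y => -(κ * (V y - v)⁻¹) - N * dist y z ^ 2) w := by
  have hDΩ : {x ∈ Ω | m ≤ g x} ⊆ Ω := sep_subset _ _
  have hnhds : ∀ x ∈ Ω, m < g x → {x ∈ Ω | m ≤ g x} ∈ 𝓝 x := fun x hx hgx =>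
    inter_mem (hΩ.mem_nhds hx)
      ((hg.continuousAt (hΩ.mem_nhds hx)).eventually_const_le hgx)
  obtain ⟨κ, hκ, v', hv', N, hN, z, hz, w, hw, hgz, hgw, hVw, hzw, hpen, hmax⟩ :=
    exists_max_sub_inv_sub_mul_dist_sq hD (hg.mono hDΩ) (hV.mono hDΩ) ⟨hx₀, hgx₀.le⟩ hgx₀ hVx₀
      hδ hε
  refine ⟨κ, hκ, N, hN, z, hz, w, hw, hv'.trans hVw, hzw, hpen, ?_, ?_⟩
  · filter_upwards [hnhds z hz.1 hgz] with y hy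
    have := hmax y hy w hw hVw.le
    linarith
  · filter_upwards [hnhds w hw.1 hgw,
      (hV.continuousAt (hΩ.mem_nhds hw.1)).eventually_const_le hVw] with s hs hVs
    have := hmax z hz s hs hVs
    rw [dist_comm s, dist_comm w]
    linarith

end Superlevel

section SuperdifferentialPair

variable {E : Type*} [NormedAddCommGroup E] [InnerProductSpace ℝ E] {Ω : Set E} {g V : E → ℝ}
  {m v δ ε : ℝ} {x₀ : E}

lemma exists_superdifferential_pair (hΩ : IsOpen Ω) (hg : ContinuousOn g Ω)
    (hV : ContinuousOn V Ω) (hD : IsCompact {x ∈ Ω | m ≤ g x})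
    (hx₀ : x₀ ∈ Ω) (hgx₀ : m < g x₀) (hVx₀ : v < V x₀) (hδ : 0 < δ) (hε : 0 < ε) :
    ∃ N > 0, ∃ z ∈ {x ∈ Ω | m ≤ g x}, ∃ w ∈ {x ∈ Ω | m ≤ g x},
      v < V w ∧ dist z w < δ ∧ N * dist z w ^ 2 < ε ∧
      (2 * N) • innerSL ℝ (z - w) ∈ superdifferential g z ∧
      ∃ a > (0 : ℝ), a • innerSL ℝ (w - z) ∈ superdifferential V w := by
  obtain ⟨κ, hκ, N, hN, z, hz, w, hw, hVw, hzw, hpen, hmaxz, hmaxw⟩ :=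
    exists_isLocalMax_sub_mul_dist_sq_pair hΩ hg hV hD hx₀ hgx₀ hVx₀ hδ hε
  obtain ⟨a, ha, hmem⟩ := exists_pos_smul_mem_superdifferential_of_neg_inv hκ
    (hV.continuousAt (hΩ.mem_nhds hw.1)) hVw (smul_innerSL_mem_superdifferential hmaxw)
  exact ⟨N, hN, z, hz, w, hw, hVw, hzw, hpen, smul_innerSL_mem_superdifferential hmaxz,
    a * (2 * N), by positivity, by rwa [mul_smul]⟩

end SuperdifferentialPair

section CompactParameterSpace

variable {X P : Type*} [TopologicalSpace P] {Ω K : Set X} {A : Set P}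

lemma exists_forall_dist_lt_of_continuousOn_prod {M : Type*} [PseudoMetricSpace X]
    [PseudoMetricSpace M] {h : X → P → M} {ε : ℝ} (hK : IsCompact K) (hA : IsCompact A)
    (hh : ContinuousOn (uncurry h) (K ×ˢ A)) (hε : 0 < ε) :
    ∃ δ > 0, ∀ x ∈ K, ∀ y ∈ K, dist x y < δ → ∀ a ∈ A, dist (h x a) (h y a) < ε := by
  have hcont : ContinuousOn (fun x => UniformFun.ofFun fun a : A => h x a) K := by
    intro q hq
    rw [ContinuousWithinAt, UniformFun.tendsto_iff_tendstoUniformly]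
    intro u hu
    obtain ⟨v, hv, hvu⟩ := hA.mem_uniformity_of_prod hh hq (symm_le_uniformity hu)
    filter_upwards [hv] with p hp a using hvu p hp a a.2
  have hbasis := UniformFun.hasBasis_uniformity_of_basis A M uniformity_basis_dist
  obtain ⟨δ, hδ, hδε⟩ := (uniformity_basis_dist.uniformContinuousOn_iff hbasis).1
    (hK.uniformContinuousOn_of_continuous hcont) ε hε
  exact ⟨δ, hδ, fun x hx y hy hxy a ha => hδε x hx y hy hxy ⟨a, ha⟩⟩

lemma continuousOn_of_isGreatest_image [TopologicalSpace X] {h : X → P → ℝ} {V : X → ℝ}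
    (hA : IsCompact A) (hh : ContinuousOn (uncurry h) (Ω ×ˢ A))
    (hV : ∀ x ∈ Ω, IsGreatest (h x '' A) (V x)) : ContinuousOn V Ω := by
  have : CompactSpace A := isCompact_iff_compactSpace.1 hA
  have hcont : Continuous fun q : Ω × A => h q.1 q.2 :=
    hh.comp_continuous (by fun_prop : Continuous fun q : Ω × A => ((q.1 : X), (q.2 : P)))
      fun q => ⟨q.1.2, q.2.2⟩
  rw [continuousOn_iff_continuous_domRestrict]
  refine (IsCompact.continuous_sSup (f := fun (x : Ω) (a : A) => h x a) isCompact_univ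
    hcont).congr fun x => ?_
  rw [image_univ, domRestrict_apply, ← (hV x x.2).csSup_eq, image_eq_range]

end CompactParameterSpace

section SymmetricDynamics

variable {E P : Type*} [NormedAddCommGroup E] [InnerProductSpace ℝ E] [ProperSpace E]
  {Ω : Set E} {A : Set P} {f : E → P → E} {K : ℝ≥0} {W : E → ℝ} {k : ℝ}

lemma apply_le_of_mem_superdifferential_neg (hΩ : IsOpen Ω)
    (hfL : ∀ a ∈ A, LipschitzOnWith K (fun x => f x a) Ω)
    (hsymm : ∀ x ∈ Ω, ∀ a ∈ A, ∃ a' ∈ A, f x a' = -f x a) (hWc : ContinuousOn W Ω)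
    (hW : ∀ x ∈ Ω, ∀ p ∈ superdifferential W x, ∀ a ∈ A, p (f x a) ≤ k)
    {x : E} (hx : x ∈ Ω) {p : E →L[ℝ] ℝ} (hp : p ∈ superdifferential (fun y => -W y) x)
    {a : P} (ha : a ∈ A) : p (f x a) ≤ k := by
  obtain ⟨a', ha', hfa'⟩ := hsymm x hx a ha
  have h := neg_le_apply_of_mem_superdifferential_neg hΩ hWc (hfL a' ha')
    (fun y hy q hq => hW y hy q hq a' ha') hx hp
  rw [hfa', map_neg] at h
  linarith

lemma nonneg_of_superdifferential_apply_le (hΩ : IsOpen Ω) (hne : Ω.Nonempty) (hA : A.Nonempty)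
    (hsymm : ∀ x ∈ Ω, ∀ a ∈ A, ∃ a' ∈ A, f x a' = -f x a) (hWc : ContinuousOn W Ω)
    (hW : ∀ x ∈ Ω, ∀ p ∈ superdifferential W x, ∀ a ∈ A, p (f x a) ≤ k) : 0 ≤ k := by
  obtain ⟨x, hx, p, hp⟩ := exists_superdifferential_nonempty hΩ hne hWc
  obtain ⟨a, ha⟩ := hA
  obtain ⟨a', ha', hfa'⟩ := hsymm x hx a ha
  have h := hW x hx p hp a' ha'
  rw [hfa', map_neg] at h
  linarith [hW x hx p hp a ha]

end SymmetricDynamics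

section Comparison

variable {E P : Type*} [NormedAddCommGroup E] [InnerProductSpace ℝ E] [ProperSpace E]
  [TopologicalSpace P] {Ω : Set E} {A : Set P} {f : E → P → E} {K : ℝ≥0} {U V W : E → ℝ}
  {k k₀ : ℝ}

lemma le_of_forall_superdifferential_apply_le (hΩ : IsOpen Ω) (hΩb : Bornology.IsBounded Ω)
    (hA : IsCompact A) (hf : ContinuousOn (uncurry f) (Ω ×ˢ A))
    (hfL : ∀ a ∈ A, LipschitzOnWith K (fun x => f x a) Ω)
    (hUc : ContinuousOn U (closure Ω)) (hU : ContDiffOn ℝ 1 U Ω)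
    (hWc : ContinuousOn W (closure Ω)) (hWU : ∀ x ∈ frontier Ω, W x ≤ U x)
    (hW : ∀ x ∈ Ω, ∀ p ∈ superdifferential W x, ∀ a ∈ A, p (f x a) ≤ k)
    (hV : ContinuousOn V Ω) (hk : k < k₀)
    (hUV : ∀ x ∈ Ω, k₀ < V x →
      ∃ a ∈ A, k₀ ≤ fderiv ℝ U x (f x a) ∧ ∀ p ∈ superdifferential V x, p (f x a) ≤ 0)
    {x₀ : E} (hx₀ : x₀ ∈ Ω) (hVx₀ : k₀ < V x₀) : W x₀ ≤ U x₀ := by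
  by_contra! hlt
  obtain ⟨m, hm, hmx₀⟩ := exists_between (sub_pos.2 hlt)
  set D := {x ∈ Ω | m ≤ W x - U x}
  have hD : IsCompact D := isCompact_sep_le_of_frontier_nonpos hΩ hΩb (hWc.sub hUc)
    (fun x hx => sub_nonpos.2 (hWU x hx)) hm
  have hDΩ : D ⊆ Ω := sep_subset _ _
  have hDU : ContinuousOn (uncurry fun x a => fderiv ℝ U x (f x a)) (D ×ˢ A) :=
    (((hU.continuousOn_fderiv_of_isOpen hΩ le_rfl).comp continuousOn_fst fun q hq => hq.1).clm_apply
      hf).mono (prod_mono hDΩ Subset.rfl)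
  have hη : 0 < (k₀ - k) / 2 := half_pos (sub_pos.2 hk)
  obtain ⟨δ, hδ, hDUδ⟩ := exists_forall_dist_lt_of_continuousOn_prod hD hA hDU hη
  obtain ⟨ε, hε, hεη⟩ := exists_pos_mul_lt hη (2 * K)
  obtain ⟨N, hN, z, hz, w, hw, hVw, hzw, hpen, hpz, r, hr, hpw⟩ := exists_superdifferential_pair hΩ
    ((hWc.sub hUc).mono subset_closure) hV hD hx₀ hmx₀ hVx₀ hδ hε
  obtain ⟨a, ha, hUa, hVa⟩ := hUV w hw.1 hVw
  have hWz : fderiv ℝ U z (f z a) + 2 * N * ⟪z - w, f z a⟫ ≤ k :=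
    hW z hz.1 _ (fderiv_add_mem_superdifferential (hU.contDiffAt (hΩ.mem_nhds hz.1)) hpz) a ha
  have hUz : k₀ - (k₀ - k) / 2 < fderiv ℝ U z (f z a) := by
    have := abs_lt.1 (hDUδ z hz w hw hzw a ha)
    linarith
  have hVw : 0 ≤ ⟪z - w, f w a⟫ := by
    have h : r * ⟪w - z, f w a⟫ ≤ 0 := hVa _ hpw
    rw [← neg_sub z w, inner_neg_left] at h
    nlinarith
  have hquad : -(2 * K * ε) ≤ 2 * N * ⟪z - w, f z a⟫ :=
    calc -(2 * K * ε) ≤ -(2 * K * (N * dist z w ^ 2)) := by gcongr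
      _ = 2 * N * -(K * dist z w ^ 2) := by ring
      _ ≤ 2 * N * ⟪z - w, f z a⟫ := by
        gcongr
        exact neg_mul_dist_sq_le_inner_of_lipschitzOnWith (hfL a ha) hz.1 hw.1 hVw
  linarith

theorem le_of_superdifferential_apply_eq_zero (hΩ : IsOpen Ω) (hΩb : Bornology.IsBounded Ω)
    (hA : IsCompact A) (hf : ContinuousOn (uncurry f) (Ω ×ˢ A))
    (hfL : ∀ a ∈ A, LipschitzOnWith K (fun x => f x a) Ω)
    (hsymm : ∀ x ∈ Ω, ∀ a ∈ A, ∃ a' ∈ A, f x a' = -f x a)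
    (hUc : ContinuousOn U (closure Ω)) (hU : ContDiffOn ℝ 1 U Ω)
    (hWc : ContinuousOn W (closure Ω)) (hWU : ∀ x ∈ frontier Ω, W x = U x)
    (hW : ∀ x ∈ Ω, ∀ p ∈ superdifferential W x, ∀ a ∈ A, p (f x a) ≤ k)
    (hV : ContinuousOn V Ω)
    (hUV : ∀ x ∈ Ω, k < V x →
      ∃ a ∈ A, fderiv ℝ U x (f x a) = V x ∧ ∀ p ∈ superdifferential V x, p (f x a) = 0)
    {x : E} (hx : x ∈ Ω) : V x ≤ k := by
  by_contra! hlt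
  obtain ⟨k₀, hk, hk₀⟩ := exists_between hlt
  have hWU_le : ∀ y ∈ Ω, k₀ < V y → W y ≤ U y := fun y hy hVy => by
    refine le_of_forall_superdifferential_apply_le hΩ hΩb hA hf hfL hUc hU hWc
      (fun y hy => (hWU y hy).le) hW hV hk (fun y hy hVy => ?_) hy hVy
    obtain ⟨a, ha, hUa, hVa⟩ := hUV y hy (hk.trans hVy)
    exact ⟨a, ha, hUa.symm ▸ hVy.le, fun p hp => (hVa p hp).le⟩
  have hUW_le : ∀ y ∈ Ω, k₀ < V y → -W y ≤ -U y := fun y hy hVy => by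
    refine le_of_forall_superdifferential_apply_le hΩ hΩb hA hf hfL hUc.neg hU.neg hWc.neg
      (fun y hy => (neg_inj.2 (hWU y hy)).le) (fun y hy p hp a ha =>
        apply_le_of_mem_superdifferential_neg hΩ hfL hsymm (hWc.mono subset_closure) hW hy
          hp ha) hV hk (fun y hy hVy => ?_) hy hVy
    obtain ⟨a, ha, hUa, hVa⟩ := hUV y hy (hk.trans hVy)
    obtain ⟨a', ha', hfa'⟩ := hsymm y hy a ha
    refine ⟨a', ha', ?_, fun p hp => ?_⟩
    · rw [fderiv_neg, hfa', neg_apply, map_neg, neg_neg, hUa]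
      exact hVy.le
    · rw [hfa', map_neg, hVa p hp, neg_zero]
  obtain ⟨a, ha, hUa, -⟩ := hUV x hx hlt
  have hWmax : IsLocalMax (fun y => W y - U y) x := by
    filter_upwards [hΩ.mem_nhds hx, (hV.continuousAt (hΩ.mem_nhds hx)).eventually_const_lt hk₀]
      with y hy hVy
    linarith [hWU_le y hy hVy, hUW_le x hx hk₀]
  have hmem := fderiv_mem_superdifferential (hU.contDiffAt (hΩ.mem_nhds hx)) hWmax
  linarith [hW x hx _ hmem a ha]

end Comparison

section Hamiltonian

variable {E P : Type*} [NormedAddCommGroup E] [InnerProductSpace ℝ E] [CompleteSpace E]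
  {A : Set P}

lemma eq_of_hasGradientAt_of_inner_le {h : E → ℝ} {v G p : E} (hG : HasGradientAt h G p)
    (hle : ∀ q, ⟪v, q⟫ ≤ h q) (heq : ⟪v, p⟫ = h p) : G = v := by
  have hmin : IsLocalMin (fun q => h q - innerSL ℝ v q) p := Eventually.of_forall fun q => by
    simpa only [innerSL_apply_apply, heq, sub_self, sub_nonneg] using hle q
  have hzero := hmin.hasFDerivAt_eq_zero (hG.hasFDerivAt.sub (innerSL ℝ v).hasFDerivAt)
  exact ext_inner_right ℝ fun q => by
    simpa [sub_eq_zero] using DFunLike.congr_fun hzero q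

lemma exists_mem_eq_gradient_of_isGreatest {F : P → E} {h : E → ℝ} {G p : E}
    (hsymm : ∀ a ∈ A, ∃ a' ∈ A, F a' = -F a)
    (hh : ∀ q, IsGreatest ((fun a => -⟪F a, q⟫) '' A) (h q)) (hG : HasGradientAt h G p) :
    ∃ a ∈ A, ⟪F a, p⟫ = h p ∧ F a = G := by
  obtain ⟨a, ha, hap⟩ := (hh p).1
  obtain ⟨a', ha', hFa'⟩ := hsymm a ha
  have heq : ⟪F a', p⟫ = h p := by rw [hFa', inner_neg_left]; exact hap
  refine ⟨a', ha', heq, (eq_of_hasGradientAt_of_inner_le hG (fun q => ?_) heq).symm⟩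
  rw [hFa', inner_neg_left]
  exact (hh q).2 (mem_image_of_mem _ ha)

end Hamiltonian

section Aronsson

variable {E P : Type*} [NormedAddCommGroup E] [InnerProductSpace ℝ E] [CompleteSpace E]
  {Ω : Set E} {A : Set P} {f : E → P → E} {H : E → E → ℝ} {k : ℝ}

lemma exists_mem_apply_eq_zero_of_aronsson {Hp : E → E → E} {U : E → ℝ} {x : E}
    (hsymm : ∀ a ∈ A, ∃ a' ∈ A, f x a' = -f x a)
    (hH : ∀ p, IsGreatest ((fun a => -⟪f x a, p⟫) '' A) (H x p))
    (hHp : HasGradientAt (H x) (Hp x (gradient U x)) (gradient U x))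
    (hsol : ∀ φ : E → ℝ, ContDiff ℝ 1 φ → IsLocalMax (fun y => H y (gradient U y) - φ y) x →
      ⟪Hp x (gradient U x), gradient φ x⟫ = 0) :
    ∃ a ∈ A, fderiv ℝ U x (f x a) = H x (gradient U x) ∧
      ∀ p ∈ superdifferential (fun y => H y (gradient U y)) x, p (f x a) = 0 := by
  obtain ⟨a, ha, hUa, hHpa⟩ := exists_mem_eq_gradient_of_isGreatest hsymm hH hHp
  refine ⟨a, ha, by rwa [← inner_gradient_left, real_inner_comm], fun p hp => ?_⟩
  obtain ⟨φ, hφ, hmax, rfl⟩ := mem_superdifferential_iff_exists_contDiff.1 hp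
  rw [← inner_gradient_left, real_inner_comm, hHpa]
  exact hsol φ hφ hmax

lemma apply_le_of_forall_hamiltonian_gradient_le {W : E → ℝ} {x : E} {a : P}
    (hsymm : ∀ a ∈ A, ∃ a' ∈ A, f x a' = -f x a)
    (hH : ∀ p, IsGreatest ((fun a => -⟪f x a, p⟫) '' A) (H x p))
    (hW : ∀ φ : E → ℝ, ContDiff ℝ 1 φ → IsLocalMax (fun y => W y - φ y) x →
      H x (gradient φ x) ≤ k) {p : E →L[ℝ] ℝ} (hp : p ∈ superdifferential W x) (ha : a ∈ A) :
    p (f x a) ≤ k := by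
  obtain ⟨φ, hφ, hmax, rfl⟩ := mem_superdifferential_iff_exists_contDiff.1 hp
  obtain ⟨a', ha', hfa'⟩ := hsymm a ha
  calc fderiv ℝ φ x (f x a) = -⟪f x a', gradient φ x⟫ := by
        rw [hfa', inner_neg_left, neg_neg, real_inner_comm, inner_gradient_left]
    _ ≤ H x (gradient φ x) := (hH _).2 (mem_image_of_mem _ ha')
    _ ≤ k := hW φ hφ hmax

lemma continuousOn_hamiltonian_gradient [TopologicalSpace P] {U : E → ℝ} (hΩ : IsOpen Ω)
    (hA : IsCompact A) (hf : ContinuousOn (uncurry f) (Ω ×ˢ A))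
    (hH : ∀ x ∈ Ω, ∀ p, IsGreatest ((fun a => -⟪f x a, p⟫) '' A) (H x p))
    (hU : ContDiffOn ℝ 1 U Ω) : ContinuousOn (fun x => H x (gradient U x)) Ω := by
  refine continuousOn_of_isGreatest_image (h := fun x a => -⟪f x a, gradient U x⟫) hA ?_
    fun x hx => hH x hx _
  have hgrad : ContinuousOn (gradient U) Ω :=
    (InnerProductSpace.toDual ℝ E).symm.continuous.comp_continuousOn
      (hU.continuousOn_fderiv_of_isOpen hΩ le_rfl)
  exact (hf.inner (𝕜 := ℝ) (hgrad.comp continuousOn_fst fun q hq => hq.1)).neg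

end Aronsson

theorem stmt_6_general {E P : Type*} [NormedAddCommGroup E] [InnerProductSpace ℝ E]
    [ProperSpace E] [TopologicalSpace P] {Ω : Set E} (hΩo : IsOpen Ω)
    (hΩb : Bornology.IsBounded Ω) {A : Set P} (hAc : IsCompact A) {f : E → P → E}
    (hfc : ContinuousOn (uncurry f) (Ω ×ˢ A)) {L : ℝ}
    (hLip : ∀ a ∈ A, ∀ x ∈ Ω, ∀ y ∈ Ω, ‖f x a - f y a‖ ≤ L * ‖x - y‖)
    (hsymm : ∀ x ∈ Ω, ∀ a ∈ A, ∃ a' ∈ A, f x a' = -f x a) {H : E → E → ℝ}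
    (hH : ∀ x ∈ Ω, ∀ p, IsGreatest ((fun a => -⟪f x a, p⟫) '' A) (H x p)) {Hp : E → E → E}
    (hHp : ∀ x ∈ Ω, ∀ p, 0 < H x p → HasGradientAt (H x) (Hp x p) p) {U : E → ℝ}
    (hUc : ContinuousOn U (closure Ω)) (hU1 : ContDiffOn ℝ 1 U Ω)
    (hsol : ∀ φ : E → ℝ, ContDiff ℝ 1 φ → ∀ x ∈ Ω, 0 < H x (gradient U x) →
      IsLocalMaxOn (fun y => H y (gradient U y) - φ y) Ω x →
      ⟪Hp x (gradient U x), gradient φ x⟫ = 0)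
    {k : ℝ} {W : E → ℝ} (hWc : ContinuousOn W (closure Ω))
    (hWsub : ∀ φ : E → ℝ, ContDiff ℝ 1 φ → ∀ x ∈ Ω,
      IsLocalMaxOn (fun y => W y - φ y) Ω x → H x (gradient φ x) ≤ k)
    (hWU : ∀ x ∈ frontier Ω, W x = U x) {x : E} (hx : x ∈ Ω) : H x (gradient U x) ≤ k := by
  obtain ⟨a, ha, -⟩ := (hH x hx 0).1
  have hW : ∀ y ∈ Ω, ∀ p ∈ superdifferential W y, ∀ b ∈ A, p (f y b) ≤ k :=
    fun y hy p hp b hb => apply_le_of_forall_hamiltonian_gradient_le (hsymm y hy) (hH y hy)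
      (fun φ hφ hmax => hWsub φ hφ y hy (hmax.on Ω)) hp hb
  have hk : 0 ≤ k := nonneg_of_superdifferential_apply_le hΩo ⟨x, hx⟩ ⟨a, ha⟩ hsymm
    (hWc.mono subset_closure) hW
  have hfL : ∀ b ∈ A, LipschitzOnWith L.toNNReal (fun y => f y b) Ω := fun b hb =>
    .of_dist_le' fun y hy z hz => by simpa only [dist_eq_norm] using hLip b hb y hy z hz
  refine le_of_superdifferential_apply_eq_zero hΩo hΩb hAc hfc hfL hsymm hUc hU1 hWc hWU hW
    (continuousOn_hamiltonian_gradient hΩo hAc hfc hH hU1) (fun y hy hky => ?_) hx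
  have hpos := hk.trans_lt hky
  exact exists_mem_apply_eq_zero_of_aronsson (hsymm y hy) (hH y hy) (hHp y hy _ hpos)
    fun φ hφ hmax => hsol φ hφ y hy hpos (hmax.on Ω)

/-- a `C¹`-solution of the Aronsson equation is absolutely minimizing:
if `W` is a viscosity subsolution of `H(x,∇W) ≤ k` in `Ω` agreeing with `U` on `∂Ω`,
then `H(x,∇U(x)) ≤ k` in `Ω`. -/
theorem stmt_6 {n m : ℕ} (Ω : Set (EuclideanSpace ℝ (Fin n)))
    (hΩo : IsOpen Ω) (hΩb : Bornology.IsBounded Ω)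
    (A : Set (EuclideanSpace ℝ (Fin m))) (hA : A.Nonempty) (hAc : IsCompact A)
    (f : EuclideanSpace ℝ (Fin n) → EuclideanSpace ℝ (Fin m) → EuclideanSpace ℝ (Fin n))
    (hfc : ContinuousOn (fun q : EuclideanSpace ℝ (Fin n) × EuclideanSpace ℝ (Fin m) =>
      f q.1 q.2) (Ω ×ˢ A))
    (L : ℝ) (hLip : ∀ a ∈ A, ∀ x ∈ Ω, ∀ y ∈ Ω, ‖f x a - f y a‖ ≤ L * ‖x - y‖)
    (hconv : ∀ x ∈ Ω, Convex ℝ (f x '' A))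
    (hsymm : ∀ x ∈ Ω, ∀ a ∈ A, ∃ a' ∈ A, f x a' = -f x a)
    (H : EuclideanSpace ℝ (Fin n) → EuclideanSpace ℝ (Fin n) → ℝ)
    -- `H(x,p) = max_{a ∈ A} (-f(x,a)·p)`
    (hH : ∀ x p, IsGreatest ((fun a => -⟪f x a, p⟫) '' A) (H x p))
    (Hp : EuclideanSpace ℝ (Fin n) → EuclideanSpace ℝ (Fin n) → EuclideanSpace ℝ (Fin n))
    (hHp : ∀ x p, 0 < H x p → HasGradientAt (H x) (Hp x p) p)
    (hHpc : ContinuousOn (fun q : EuclideanSpace ℝ (Fin n) × EuclideanSpace ℝ (Fin n) =>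
      Hp q.1 q.2) {q | 0 < H q.1 q.2})
    (U : EuclideanSpace ℝ (Fin n) → ℝ)
    (hUc : ContinuousOn U (closure Ω)) (hU1 : ContDiffOn ℝ 1 U Ω)
    -- `U` is a `C¹`-solution of the Aronsson equation: with `V(x) = H(x,∇U(x))` and
    -- `F(x) = -H_p(x,∇U(x))`, `V` is both a viscosity sub- and supersolution of
    -- `-F·∇V = 0` and of `F·∇V = 0`
    (hsolmax : ∀ φ : EuclideanSpace ℝ (Fin n) → ℝ, ContDiff ℝ 1 φ → ∀ x₀ ∈ Ω,
      0 < H x₀ (gradient U x₀) →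
      IsLocalMaxOn (fun x => H x (gradient U x) - φ x) Ω x₀ →
      -⟪-(Hp x₀ (gradient U x₀)), gradient φ x₀⟫ ≤ 0 ∧
        ⟪-(Hp x₀ (gradient U x₀)), gradient φ x₀⟫ ≤ 0)
    (hsolmin : ∀ φ : EuclideanSpace ℝ (Fin n) → ℝ, ContDiff ℝ 1 φ → ∀ x₀ ∈ Ω,
      0 < H x₀ (gradient U x₀) →
      IsLocalMinOn (fun x => H x (gradient U x) - φ x) Ω x₀ →
      0 ≤ -⟪-(Hp x₀ (gradient U x₀)), gradient φ x₀⟫ ∧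
        0 ≤ ⟪-(Hp x₀ (gradient U x₀)), gradient φ x₀⟫)
    (k : ℝ) (W : EuclideanSpace ℝ (Fin n) → ℝ) (hWc : ContinuousOn W (closure Ω))
    -- `W` is a viscosity subsolution of `H(x,∇W(x)) ≤ k` in `Ω`
    (hWsub : ∀ φ : EuclideanSpace ℝ (Fin n) → ℝ, ContDiff ℝ 1 φ → ∀ x₀ ∈ Ω,
      IsLocalMaxOn (fun x => W x - φ x) Ω x₀ → H x₀ (gradient φ x₀) ≤ k)
    (hWU : ∀ x ∈ frontier Ω, W x = U x) :
    ∀ x ∈ Ω, H x (gradient U x) ≤ k := by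
  exact fun x hx => stmt_6_general hΩo hΩb hAc hfc hLip hsymm (fun x _ => hH x) (fun x _ => hHp x)
    hUc hU1 (fun φ hφ y hy hpos hmax => by
      simpa only [inner_neg_left, neg_neg, neg_nonpos, ← le_antisymm_iff] using
        hsolmax φ hφ y hy hpos hmax) hWc hWsub hWU hx
end

section
/- Let Ω ⊆ ℝⁿ be open, 𝒯 ⊆ Ω a closed target, A ⊆ ℝᵐ nonempty compact, f : Ω × A → ℝⁿ continuous, uniformly Lipschitz in x, with f(x,A) convex and −f(x,A) ⊆ f(x,A), and H(x,p) = max_{a∈A}(−f(x,a)·p) with H_p existing and continuous where H > 0. Let ℋ = {x : H(x,∇U(x)) = 0} and assume U ∈ C(cl(Ω∖𝒯)) ∩ C¹(Ω∖(𝒯∩ℋ)) is nonnegative, is a C¹-supersolution of the Aronsson equation on Ω∖(𝒯∩ℋ), and satisfies U = 0 on 𝒯, U = M on ∂Ω, and 0 < U(x) < M for x ∈ Ω∖𝒯 for some M > 0. Then for every x₀ ∈ Ω∖(𝒯∪ℋ) there exist a time t̄ ≤ U(x₀)/H(x₀,∇U(x₀)) and a C¹ curve x : [0,t̄] → cl Ω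 with x(0) = x₀, ẋ(t) = −H_p(x(t),∇U(x(t))) and x(t) ∈ Ω∖𝒯 for t ∈ [0,t̄), such that: (i) t ↦ H(x(t),∇U(x(t))) is nondecreasing on [0,t̄); (ii) t ↦ U(x(t)) is strictly decreasing on [0,t̄]; (iii) x(t̄) ∈ 𝒯, and consequently the minimum time function satisfies T(x₀) ≤ U(x₀)/H(x₀,∇U(x₀)). -/
open Set MeasureTheory
open scoped RealInnerProductSpace

/-- An admissible trajectory of the control system `ẋ = f(x,a)`, `a(t) ∈ A`,
starting at `x₀`: a continuous curve satisfying the integral equation for some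
measurable control. -/
def IsAdmTraj {n m : ℕ} (A : Set (EuclideanSpace ℝ (Fin m)))
    (f : EuclideanSpace ℝ (Fin n) → EuclideanSpace ℝ (Fin m) → EuclideanSpace ℝ (Fin n))
    (x₀ : EuclideanSpace ℝ (Fin n)) (x : ℝ → EuclideanSpace ℝ (Fin n)) : Prop :=
  x 0 = x₀ ∧ ContinuousOn x (Ici (0:ℝ)) ∧
    ∃ a : ℝ → EuclideanSpace ℝ (Fin m), Measurable a ∧ (∀ t, a t ∈ A) ∧
      ∀ t : ℝ, 0 ≤ t → x t = x₀ + ∫ s in (0:ℝ)..t, f (x s) (a s)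

/-- The set of times at which the target `T` can be reached from `x₀` by an
admissible trajectory staying in `Ω`; the minimum time function is its infimum. -/
def reachTimes {n m : ℕ} (Ω T : Set (EuclideanSpace ℝ (Fin n)))
    (A : Set (EuclideanSpace ℝ (Fin m)))
    (f : EuclideanSpace ℝ (Fin n) → EuclideanSpace ℝ (Fin m) → EuclideanSpace ℝ (Fin n))
    (x₀ : EuclideanSpace ℝ (Fin n)) : Set ℝ :=
  {t | 0 ≤ t ∧ ∃ x : ℝ → EuclideanSpace ℝ (Fin n), IsAdmTraj A f x₀ x ∧
    (∀ s ∈ Icc (0:ℝ) t, x s ∈ Ω) ∧ x t ∈ T}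

/-!
Write `V = H(·, ∇U)` and `F = -H_p(·, ∇U)`. The viscosity inequality, tested with paraboloids
`c‖· - y‖²`, says that `⟪F (S y), S y - y⟫ ≥ 0` at every proximal point `S y` of `y`, that is, at
every maximizer of `u ↦ V u - c‖u - y‖²`. Hence an Euler step of the field `F ∘ S` decreases the
sup-convolution of `V` by at most `O(c h²)`; letting `c → ∞` and `c h → 0` and extracting a limit by
Arzelà–Ascoli gives integral curves of `F` along which `V` is nondecreasing.

By Euler's identity `⟪∇U, F⟫ = -V`, so along such a curve `U(x(t)) + V(x₀) t` is nonincreasing.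
Since `0 ≤ U`, the curve lives for a time at most `U(x₀) / V(x₀)`, and by linear growth of `f` a
maximal one has an end point. There `V ≥ V(x₀) > 0` and `U < M`, so the curve can be stopped neither
by `V` vanishing nor by `∂Ω`, but only by the target. A Borel selection turns it into an admissible
trajectory, which then rests at the target because `0 ∈ f(x, A)`.
-/

open Filter Metric
open scoped NNReal Topology

theorem exists_strictMono_tendsto_of_lipschitzWith {X E : Type*} [PseudoMetricSpace X]
    [ProperSpace X] [MetricSpace E] [ProperSpace E] {C : ℝ≥0} {u : ℕ → X → E}
    (hu : ∀ n, LipschitzWith C (u n)) {x₀ : X} {z : E} (hu₀ : ∀ n, u n x₀ = z) :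
    ∃ φ : ℕ → ℕ, StrictMono φ ∧ ∃ g : X → E, LipschitzWith C g ∧
      ∀ t, Tendsto (fun n ↦ u (φ n) t) atTop (𝓝 (g t)) := by
  let S : Set C(X, E) := {g | LipschitzWith C g ∧ g x₀ = z}
  have hpointwise : IsCompact (ContinuousMap.toFun '' S) := by
    have himage : ContinuousMap.toFun '' S = {g : X → E | LipschitzWith C g ∧ g x₀ = z} := by
      ext g
      exact ⟨by rintro ⟨g, hg, rfl⟩; exact hg, fun hg ↦ ⟨⟨g, hg.1.continuous⟩, hg, rfl⟩⟩
    rw [himage]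
    refine (isCompact_univ_pi fun t ↦ isCompact_closedBall z (C * dist t x₀)).of_isClosed_subset
      ?_ fun g hg t _ ↦ ?_
    · exact (isClosed_setOfPred_lipschitzWith C).inter
        (isClosed_eq (continuous_apply x₀) continuous_const)
    · simpa only [Metric.mem_closedBall, hg.2] using hg.1.dist_le_mul t x₀
  have hequi : Equicontinuous ((↑) : S → X → E) :=
    (LipschitzWith.uniformEquicontinuous _ C fun g ↦ g.2.1).equicontinuous
  have hS : IsCompact S := ArzelaAscoli.isCompact_of_equicontinuous S hpointwise hequi
  obtain ⟨g, hg, φ, hφ, hlim⟩ :=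
    hS.tendsto_subseq (x := fun n ↦ ⟨u n, (hu n).continuous⟩) fun n ↦ ⟨hu n, hu₀ n⟩
  exact ⟨φ, hφ, g, hg.1, fun t ↦ ((continuous_eval_const t).tendsto g).comp hlim⟩

section Euler

theorem stronglyMeasurable_comp_natFloor_div {X : Type*} [TopologicalSpace X] (v : ℕ → X) (h : ℝ) :
    StronglyMeasurable fun τ : ℝ ↦ v ⌊τ / h⌋₊ :=
  (StronglyMeasurable.of_discrete (f := v)).comp_measurable
    (Nat.measurable_floor.comp (measurable_id.div_const h))

theorem intervalIntegrable_comp_natFloor_div {E : Type*} [NormedAddCommGroup E] {v : ℕ → E}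
    {C : ℝ} (hv : ∀ k, ‖v k‖ ≤ C) (h a b : ℝ) :
    IntervalIntegrable (fun τ ↦ v ⌊τ / h⌋₊) volume a b :=
  (intervalIntegrable_const (c := C)).mono_fun
    (stronglyMeasurable_comp_natFloor_div v h).aestronglyMeasurable
    (ae_of_all _ fun _ ↦ (hv _).trans (le_abs_self _))

variable {E : Type*} [NormedAddCommGroup E] [NormedSpace ℝ E]

/-- The polygonal path of Euler's method from `z` with step `h`, whose velocity on
`[k * h, (k + 1) * h)` is `v k`. -/
noncomputable def eulerPath (z : E) (h : ℝ) (v : ℕ → E) (t : ℝ) : E :=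
  z + ∫ τ in (0 : ℝ)..t, v ⌊τ / h⌋₊

variable {z : E} {h : ℝ} {v : ℕ → E} {C : ℝ≥0}

theorem eulerPath_zero : eulerPath z h v 0 = z := by
  rw [eulerPath, intervalIntegral.integral_same, add_zero]

theorem eulerPath_sub_eulerPath (hv : ∀ k, ‖v k‖ ≤ C) (a b : ℝ) :
    eulerPath z h v b - eulerPath z h v a = ∫ τ in a..b, v ⌊τ / h⌋₊ := by
  rw [eulerPath, eulerPath, add_sub_add_left_eq_sub]
  exact intervalIntegral.integral_interval_sub_left
    (intervalIntegrable_comp_natFloor_div hv h 0 b) (intervalIntegrable_comp_natFloor_div hv h 0 a)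

theorem lipschitzWith_eulerPath (hv : ∀ k, ‖v k‖ ≤ C) : LipschitzWith C (eulerPath z h v) :=
  LipschitzWith.of_dist_le_mul fun a b ↦ by
    rw [dist_eq_norm, eulerPath_sub_eulerPath hv, Real.dist_eq]
    exact intervalIntegral.norm_integral_le_of_norm_le_const fun τ _ ↦ hv _

theorem eulerPath_natCast_mul [CompleteSpace E] (hh : 0 < h) (hv : ∀ k, ‖v k‖ ≤ C) {y : ℕ → E}
    (hy₀ : y 0 = z) (hy : ∀ k, y (k + 1) = y k + h • v k) (k : ℕ) :
    eulerPath z h v (k * h) = y k := by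
  induction k with
  | zero => rw [Nat.cast_zero, zero_mul, eulerPath_zero, hy₀]
  | succ k ih =>
    have hconst : ∫ τ in (k * h)..((k + 1 : ℕ) * h), v ⌊τ / h⌋₊ = h • v k := by
      have hle : k * h ≤ (k + 1 : ℕ) * h := by gcongr; exact k.le_succ
      have hfloor : EqOn (fun τ ↦ v ⌊τ / h⌋₊) (fun _ ↦ v k) (Ioo (k * h) ((k + 1 : ℕ) * h)) := by
        intro τ hτ
        have hk : ⌊τ / h⌋₊ = k := (Nat.floor_eq_iff
          (div_nonneg ((by positivity : 0 ≤ k * h).trans hτ.1.le) hh.le)).2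
          ⟨(le_div_iff₀ hh).2 hτ.1.le, (div_lt_iff₀ hh).2 (mod_cast hτ.2)⟩
        simp only [hk]
      rw [intervalIntegral.integral_congr_Ioo_of_le hle hfloor, intervalIntegral.integral_const]
      congr 1
      push_cast
      ring
    rw [hy, ← ih, ← hconst, ← eulerPath_sub_eulerPath hv, add_sub_cancel]

theorem exists_isIntegralCurveOn_of_tendsto_eulerPath_sub [FiniteDimensional ℝ E] {K : Set E}
    (hK : IsCompact K) {F : E → E} (hF : ContinuousOn F K) {δ : ℝ} {h : ℕ → ℝ} {s : ℕ → ℕ → E}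
    (hs : ∀ n k, s n k ∈ K) (hnear : ∀ t ∈ Icc 0 δ, Tendsto
      (fun n ↦ eulerPath z (h n) (F ∘ s n) t - s n ⌊t / h n⌋₊) atTop (𝓝 0)) :
    ∃ φ : ℕ → ℕ, StrictMono φ ∧ ∃ x : ℝ → E, x 0 = z ∧
      (∀ t ∈ Icc 0 δ, Tendsto (fun n ↦ s (φ n) ⌊t / h (φ n)⌋₊) atTop (𝓝 (x t))) ∧
      IsIntegralCurveOn x (fun _ ↦ F) (Icc 0 δ) := by
  have := FiniteDimensional.proper ℝ E
  obtain ⟨C, hC⟩ := hK.exists_bound_of_continuousOn hF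
  have hC' : ∀ n k, ‖(F ∘ s n) k‖ ≤ C.toNNReal := fun n k ↦
    (hC _ (hs n k)).trans (Real.le_coe_toNNReal C)
  obtain ⟨φ, hφ, x, hx, hlim⟩ := exists_strictMono_tendsto_of_lipschitzWith
    (u := fun n ↦ eulerPath z (h n) (F ∘ s n)) (fun n ↦ lipschitzWith_eulerPath (hC' n))
    (fun n ↦ eulerPath_zero)
  have hnodes : ∀ t ∈ Icc 0 δ, Tendsto (fun n ↦ s (φ n) ⌊t / h (φ n)⌋₊) atTop (𝓝 (x t)) :=
    fun t ht ↦ by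
      simpa only [sub_sub_cancel, sub_zero, Function.comp_def] using
        (hlim t).sub ((hnear t ht).comp hφ.tendsto_atTop)
  have hxK : MapsTo x (Icc 0 δ) K := fun t ht ↦
    hK.isClosed.mem_of_tendsto (hnodes t ht) (Eventually.of_forall fun n ↦ hs _ _)
  have hintegral : ∀ t ∈ Icc 0 δ, x t = z + ∫ τ in (0 : ℝ)..t, F (x τ) := fun t ht ↦ by
    refine tendsto_nhds_unique (hlim t) (tendsto_const_nhds.add ?_)
    refine intervalIntegral.tendsto_integral_filter_of_dominated_convergence (fun _ ↦ C)
      (Eventually.of_forall fun n ↦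
        (stronglyMeasurable_comp_natFloor_div _ _).aestronglyMeasurable)
      (Eventually.of_forall fun n ↦ ae_of_all _ fun τ _ ↦ hC _ (hs _ _))
      intervalIntegrable_const (ae_of_all _ fun τ hτ ↦ ?_)
    have hτδ : τ ∈ Icc 0 δ := by
      rw [uIoc_of_le ht.1] at hτ
      exact ⟨hτ.1.le, hτ.2.trans ht.2⟩
    exact ((hF _ (hxK hτδ)).tendsto).comp (tendsto_nhdsWithin_of_tendsto_nhds_of_eventually_within
      _ (hnodes τ hτδ) (Eventually.of_forall fun n ↦ hs _ _))
  have hx₀ : x 0 = z := tendsto_nhds_unique (hlim 0)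
    (by simp only [eulerPath_zero, tendsto_const_nhds])
  refine ⟨φ, hφ, x, hx₀, hnodes, fun t ht ↦ ?_⟩
  refine (ODE.hasDerivWithinAt_picard_Icc (f := fun _ ↦ F) (u := K)
    ⟨le_rfl, ht.1.trans ht.2⟩ (hF.comp continuousOn_snd fun p hp ↦ hp.2)
    hx.continuous.continuousOn (fun t ht ↦ hxK ht) z ht).congr_of_mem
    (fun t ht ↦ ?_) ht
  rw [hintegral t ht, ODE.picard_apply]

end Euler

section ProxEuler

variable {E : Type*} [NormedAddCommGroup E]

/-- The function `V` penalized by the squared distance to `y`; its supremum over `u`, as a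
function of `y`, is the sup-convolution of `V`. -/
def penalized (V : E → ℝ) (c : ℝ) (y u : E) : ℝ := V u - c * ‖u - y‖ ^ 2

/-- `S y` is a proximal point of `y`: it attains the sup-convolution of `V` over `B` at `y`. -/
def IsProxSelection (V : E → ℝ) (B : Set E) (c : ℝ) (S : E → E) : Prop :=
  ∀ y, S y ∈ B ∧ IsMaxOn (penalized V c y) B (S y)

theorem exists_isProxSelection {V : E → ℝ} {B : Set E} (hB : IsCompact B) (hne : B.Nonempty)
    (hV : ContinuousOn V B) (c : ℝ) : ∃ S, IsProxSelection V B c S := by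
  have hcont : ∀ y, ContinuousOn (penalized V c y) B := fun y ↦ by
    unfold penalized
    fun_prop
  choose S hS using fun y ↦ hB.exists_isMaxOn hne (hcont y)
  exact ⟨S, hS⟩

theorem IsProxSelection.le_penalized {V : E → ℝ} {B : Set E} {c : ℝ} {S : E → E}
    (hS : IsProxSelection V B c S) {y : E} (hy : y ∈ B) : V y ≤ penalized V c y (S y) := by
  simpa [penalized] using (hS y).2 hy

theorem penalized_le {V : E → ℝ} {c : ℝ} (hc : 0 ≤ c) (y u : E) : penalized V c y u ≤ V u :=
  sub_le_self _ (by positivity)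

theorem IsProxSelection.mul_sq_norm_sub_le {V : E → ℝ} {B : Set E} {c M : ℝ} {S : E → E}
    (hS : IsProxSelection V B c S) (hM : ∀ x ∈ B, |V x| ≤ M) {y : E} (hy : y ∈ B) :
    c * ‖S y - y‖ ^ 2 ≤ 2 * M := by
  have hle := hS.le_penalized hy
  have hVy := neg_le_of_abs_le (hM y hy)
  have hVS := le_of_abs_le (hM _ (hS y).1)
  unfold penalized at hle
  linarith

variable {V : E → ℝ} {F S : E → E} {z : E} {c h r C M : ℝ}

/-- Admissible parameters of the proximal Euler method around `z`: `M` and `C` bound `V` and `F` on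
`closedBall z (2 * r)`, and `c` is so large that the proximal points of `closedBall z r` are
interior to `closedBall z (2 * r)`. -/
structure IsProxEulerScheme (V : E → ℝ) (F : E → E) (z : E) (r C M c h : ℝ) (S : E → E) :
    Prop where
  radius_pos : 0 < r
  speed_pos : 0 < C
  penalty_pos : 0 < c
  step_pos : 0 < h
  abs_le : ∀ x ∈ closedBall z (2 * r), |V x| ≤ M
  norm_le : ∀ x ∈ closedBall z (2 * r), ‖F x‖ ≤ C
  lt_penalty : 2 * M < c * r ^ 2
  isProxSelection : IsProxSelection V (closedBall z (2 * r)) c S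

theorem exists_isProxEulerScheme_seq [ProperSpace E] (hr : 0 < r) (hC : 0 < C)
    (hV : ContinuousOn V (closedBall z (2 * r)))
    (hM : ∀ x ∈ closedBall z (2 * r), |V x| ≤ M) (hFC : ∀ x ∈ closedBall z (2 * r), ‖F x‖ ≤ C) :
    ∃ (c h : ℕ → ℝ) (S : ℕ → E → E),
      (∀ n, IsProxEulerScheme V F z r C M (c n) (h n) (S n)) ∧
      Tendsto (fun n ↦ (c n)⁻¹) atTop (𝓝 0) ∧ Tendsto h atTop (𝓝 0) ∧
      Tendsto (fun n ↦ c n * h n) atTop (𝓝 0) := by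
  have hzB : z ∈ closedBall z (2 * r) := mem_closedBall_self (by positivity)
  have hM₀ : 0 ≤ M := (abs_nonneg _).trans (hM z hzB)
  choose S hS using exists_isProxSelection (isCompact_closedBall z (2 * r)) ⟨z, hzB⟩ hV
  let c : ℕ → ℝ := fun n ↦ n + (2 * M / r ^ 2 + 1)
  have hc : ∀ n, 0 < c n := fun n ↦ by positivity
  have hcM : ∀ n, 2 * M < c n * r ^ 2 := fun n ↦ by
    rw [← div_lt_iff₀ (by positivity)]
    linarith [n.cast_nonneg (α := ℝ)]
  have hc_inv : Tendsto (fun n ↦ (c n)⁻¹) atTop (𝓝 0) :=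
    tendsto_inv_atTop_zero.comp (tendsto_atTop_add_const_right _ _ tendsto_natCast_atTop_atTop)
  -- The Euler scheme loses `O(c * h)` of the value of `V`, so `h` must vanish faster than `c⁻¹`.
  refine ⟨c, fun n ↦ (c n)⁻¹ ^ 2, fun n ↦ S (c n), fun n ↦ ?_, hc_inv, ?_, ?_⟩
  · exact ⟨hr, hC, hc n, pow_pos (inv_pos.2 (hc n)) 2, hM, hFC, hcM n, hS (c n)⟩
  · simpa using hc_inv.pow 2
  · refine hc_inv.congr fun n ↦ ?_
    have := hc n
    field_simp

namespace IsProxEulerScheme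

theorem norm_comp_le (hs : IsProxEulerScheme V F z r C M c h S) (y : E) : ‖F (S y)‖ ≤ C :=
  hs.norm_le _ (hs.isProxSelection y).1

theorem closedBall_subset (hs : IsProxEulerScheme V F z r C M c h S) :
    closedBall z r ⊆ closedBall z (2 * r) :=
  closedBall_subset_closedBall (by linarith [hs.radius_pos])

theorem natFloor_mul_le (hs : IsProxEulerScheme V F z r C M c h S) {t : ℝ} (ht : 0 ≤ t) :
    ⌊t / h⌋₊ * h ≤ t :=
  (le_div_iff₀ hs.step_pos).1 (Nat.floor_le (div_nonneg ht hs.step_pos.le))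

theorem norm_comp_sub_le (hs : IsProxEulerScheme V F z r C M c h S) {y : E}
    (hy : y ∈ closedBall z r) : ‖S y - y‖ ≤ √(2 * M / c) :=
  Real.le_sqrt_of_sq_le <| (le_div_iff₀' hs.penalty_pos).2 <|
    hs.isProxSelection.mul_sq_norm_sub_le hs.abs_le (hs.closedBall_subset hy)

end IsProxEulerScheme

section NormedSpace

variable [NormedSpace ℝ E]

/-- The nodes of Euler's method for the field `F ∘ S`. -/
def proxEulerNode (F S : E → E) (z : E) (h : ℝ) (k : ℕ) : E := (fun y ↦ y + h • F (S y))^[k] z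

theorem proxEulerNode_succ (F S : E → E) (z : E) (h : ℝ) (k : ℕ) :
    proxEulerNode F S z h (k + 1) =
      proxEulerNode F S z h k + h • F (S (proxEulerNode F S z h k)) :=
  Function.iterate_succ_apply' _ _ _

theorem norm_proxEulerNode_sub_le (hh : 0 ≤ h) (hFS : ∀ y, ‖F (S y)‖ ≤ C) (k : ℕ) :
    ‖proxEulerNode F S z h k - z‖ ≤ k * h * C := by
  induction k with
  | zero => simp [proxEulerNode]
  | succ k ih =>
    rw [proxEulerNode_succ, add_sub_right_comm]
    calc
      _ ≤ k * h * C + h * C := by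
        refine norm_add_le_of_le ih ?_
        rw [norm_smul, Real.norm_of_nonneg hh]
        gcongr
        exact hFS _
      _ = (k + 1 : ℕ) * h * C := by push_cast; ring

theorem IsProxEulerScheme.node_mem_closedBall (hs : IsProxEulerScheme V F z r C M c h S) {k : ℕ}
    (hk : k * h ≤ r / C) : proxEulerNode F S z h k ∈ closedBall z r :=
  mem_closedBall_iff_norm.2 ((norm_proxEulerNode_sub_le hs.step_pos.le hs.norm_comp_le k).trans
    ((le_div_iff₀ hs.speed_pos).1 hk))

theorem IsProxEulerScheme.norm_eulerPath_sub_le [CompleteSpace E]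
    (hs : IsProxEulerScheme V F z r C M c h S) {t : ℝ} (ht : t ∈ Icc 0 (r / C)) :
    ‖eulerPath z h (F ∘ S ∘ proxEulerNode F S z h) t - S (proxEulerNode F S z h ⌊t / h⌋₊)‖ ≤
      C * h + √(2 * M / c) := by
  lift C to ℝ≥0 using hs.speed_pos.le
  have hkt := hs.natFloor_mul_le ht.1
  set k := ⌊t / h⌋₊
  have htk : t < (k + 1) * h := (div_lt_iff₀ hs.step_pos).1 (Nat.lt_floor_add_one _)
  have hpath : ‖eulerPath z h (F ∘ S ∘ proxEulerNode F S z h) t - proxEulerNode F S z h k‖ ≤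
      C * h := by
    have hv : ∀ i, ‖(F ∘ S ∘ proxEulerNode F S z h) i‖ ≤ C := fun i ↦ hs.norm_comp_le _
    rw [← eulerPath_natCast_mul hs.step_pos hv rfl (proxEulerNode_succ F S z h), ← dist_eq_norm]
    refine ((lipschitzWith_eulerPath hv).dist_le_mul t _).trans ?_
    rw [Real.dist_eq, abs_of_nonneg (sub_nonneg.2 hkt)]
    exact mul_le_mul_of_nonneg_left (by linarith) C.coe_nonneg
  have hprox := hs.norm_comp_sub_le (hs.node_mem_closedBall (hkt.trans ht.2))
  rw [norm_sub_rev] at hprox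
  exact norm_sub_le_norm_sub_add_norm_sub .. |>.trans (add_le_add hpath hprox)

end NormedSpace

section InnerProductSpace

variable [InnerProductSpace ℝ E]

/-- The first-order condition, tested with quadratic functions only, for `V` to be a viscosity
subsolution of `-⟪F, ∇V⟫ = 0` on `O`. -/
def IsProxAscentOn (V : E → ℝ) (F : E → E) (O : Set E) : Prop :=
  ∀ x ∈ O, ∀ y, ∀ c > 0, IsLocalMax (penalized V c y) x → 0 ≤ ⟪F x, x - y⟫

theorem IsProxEulerScheme.inner_nonneg (hs : IsProxEulerScheme V F z r C M c h S)
    (hV : IsProxAscentOn V F (ball z (2 * r))) {y : E} (hy : y ∈ closedBall z r) :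
    0 ≤ ⟪F (S y), S y - y⟫ := by
  have hnorm : ‖S y - y‖ < r := lt_of_pow_lt_pow_left₀ 2 hs.radius_pos.le <|
    lt_of_mul_lt_mul_left ((hs.isProxSelection.mul_sq_norm_sub_le hs.abs_le
      (hs.closedBall_subset hy)).trans_lt hs.lt_penalty) hs.penalty_pos.le
  have hball : S y ∈ ball z (2 * r) := by
    rw [mem_closedBall] at hy
    rw [mem_ball]
    linarith [dist_triangle (S y) y z, dist_eq_norm (S y) y]
  exact hV _ hball y c hs.penalty_pos ((hs.isProxSelection y).2.isLocalMax
    (mem_of_superset (isOpen_ball.mem_nhds hball) ball_subset_closedBall))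

theorem IsProxSelection.penalized_step {B : Set E} (hS : IsProxSelection V B c S) (hc : 0 ≤ c)
    (hh : 0 ≤ h) (hFS : ∀ y, ‖F (S y)‖ ≤ C) {y : E} (hinner : 0 ≤ ⟪F (S y), S y - y⟫) :
    penalized V c y (S y) - c * (h * C) ^ 2 ≤
      penalized V c (y + h • F (S y)) (S (y + h • F (S y))) := by
  -- To first order in `h`, the Euler step does not move `y` away from `S y`.
  have hsq : ‖S y - (y + h • F (S y))‖ ^ 2 ≤ ‖S y - y‖ ^ 2 + (h * C) ^ 2 :=
    calc
      _ = ‖S y - y‖ ^ 2 - 2 * (h * ⟪F (S y), S y - y⟫) + (h * ‖F (S y)‖) ^ 2 := by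
        rw [← sub_sub, norm_sub_sq_real, inner_smul_right, real_inner_comm, norm_smul,
          Real.norm_of_nonneg hh]
      _ ≤ ‖S y - y‖ ^ 2 + (h * C) ^ 2 := by
        gcongr
        · exact sub_le_self _ (by positivity)
        · exact hFS y
  refine le_trans ?_ ((hS (y + h • F (S y))).2 (hS y).1)
  change V (S y) - c * _ - _ ≤ V (S y) - c * _
  linarith [mul_le_mul_of_nonneg_left hsq hc]

theorem IsProxSelection.penalized_proxEulerNode_le {B : Set E} (hS : IsProxSelection V B c S)
    (hc : 0 ≤ c) (hh : 0 ≤ h) (hFS : ∀ y, ‖F (S y)‖ ≤ C) {j k : ℕ} (hjk : j ≤ k)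
    (hinner : ∀ i < k, 0 ≤ ⟪F (S (proxEulerNode F S z h i)),
      S (proxEulerNode F S z h i) - proxEulerNode F S z h i⟫) :
    penalized V c (proxEulerNode F S z h j) (S (proxEulerNode F S z h j)) -
        k * (c * (h * C) ^ 2) ≤
      penalized V c (proxEulerNode F S z h k) (S (proxEulerNode F S z h k)) := by
  induction k, hjk using Nat.le_induction with
  | base => exact sub_le_self _ (by positivity)
  | succ k _ ih =>
    have hstep := hS.penalized_step hc hh hFS (hinner k k.lt_succ_self)
    rw [← proxEulerNode_succ] at hstep
    push_cast
    linarith [ih fun i hi ↦ hinner i (hi.trans k.lt_succ_self)]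

theorem IsProxEulerScheme.le_comp_node (hs : IsProxEulerScheme V F z r C M c h S)
    (hV : IsProxAscentOn V F (ball z (2 * r))) {j k : ℕ} (hjk : j ≤ k) (hk : k * h ≤ r / C) :
    V (proxEulerNode F S z h j) - c * h * r * C ≤ V (S (proxEulerNode F S z h k)) := by
  have hc := hs.penalty_pos
  have hh := hs.step_pos
  have hC := hs.speed_pos
  have hmem : ∀ i ≤ k, proxEulerNode F S z h i ∈ closedBall z r := fun i hi ↦
    hs.node_mem_closedBall (le_trans (by gcongr) hk)
  have hle := hs.isProxSelection.le_penalized (hs.closedBall_subset (hmem j hjk))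
  have henvelope := hs.isProxSelection.penalized_proxEulerNode_le hc.le hh.le hs.norm_comp_le hjk
    fun i hi ↦ hs.inner_nonneg hV (hmem i hi.le)
  have hloss : k * (c * (h * C) ^ 2) ≤ c * h * r * C :=
    calc
      _ = k * h * (c * h * C ^ 2) := by ring
      _ ≤ r / C * (c * h * C ^ 2) := by gcongr
      _ = c * h * r * C := by field_simp
  linarith [penalized_le hc.le (V := V) (proxEulerNode F S z h k) (S (proxEulerNode F S z h k))]

end InnerProductSpace

end ProxEuler

section AscentCurve

variable {E : Type*} [NormedAddCommGroup E]

/-- A curve in `O` solving `ẋ = F x` on the time set `s` along which `V` is nondecreasing. -/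
structure IsAscentCurveOn [NormedSpace ℝ E] (V : E → ℝ) (F : E → E) (O : Set E) (x : ℝ → E)
    (s : Set ℝ) : Prop where
  mapsTo : MapsTo x s O
  isIntegralCurveOn : IsIntegralCurveOn x (fun _ ↦ F) s
  monotoneOn : MonotoneOn (fun t ↦ V (x t)) s

namespace IsAscentCurveOn

variable [NormedSpace ℝ E] {V : E → ℝ} {F : E → E} {O O' : Set E} {x y : ℝ → E} {s s' : Set ℝ}
  {a b c : ℝ}

theorem mono (hx : IsAscentCurveOn V F O x s) (hs : s' ⊆ s) (hO : O ⊆ O') :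
    IsAscentCurveOn V F O' x s' :=
  ⟨(hx.mapsTo.mono_left hs).mono_right hO, hx.isIntegralCurveOn.mono hs, hx.monotoneOn.mono hs⟩

theorem congr (hx : IsAscentCurveOn V F O x s) (hxy : EqOn x y s) : IsAscentCurveOn V F O y s where
  mapsTo := hx.mapsTo.congr hxy
  isIntegralCurveOn t ht := by
    rw [← hxy ht]
    exact (hx.isIntegralCurveOn t ht).congr_of_mem (fun τ hτ ↦ (hxy hτ).symm) ht
  monotoneOn := hx.monotoneOn.congr fun t ht ↦ congrArg V (hxy ht)

open scoped Pointwise in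
theorem comp_sub (hx : IsAscentCurveOn V F O x (Icc 0 c)) (b : ℝ) :
    IsAscentCurveOn V F O (fun t ↦ x (t - b)) (Icc b (b + c)) := by
  have hmaps : MapsTo (fun t ↦ t - b) (Icc b (b + c)) (Icc 0 c) := fun t ht ↦
    ⟨sub_nonneg.2 ht.1, sub_le_iff_le_add'.2 ht.2⟩
  refine ⟨hx.mapsTo.comp hmaps, ?_,
    hx.monotoneOn.comp (fun _ _ _ _ hst ↦ sub_le_sub_right hst b) hmaps⟩
  have hIcc : b +ᵥ Icc 0 c = Icc b (b + c) := by
    simp only [← image_vadd, vadd_eq_add, image_const_add_Icc, add_zero]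
  exact hIcc ▸ hx.isIntegralCurveOn.comp_sub b

theorem union_Icc (hab : a ≤ b) (hbc : b ≤ c) (h₁ : IsAscentCurveOn V F O x (Icc a b))
    (h₂ : IsAscentCurveOn V F O x (Icc b c)) : IsAscentCurveOn V F O x (Icc a c) := by
  rw [← Icc_union_Icc_eq_Icc hab hbc]
  refine ⟨h₁.mapsTo.union h₂.mapsTo, fun t _ ↦ ?_,
    h₁.monotoneOn.union_right h₂.monotoneOn (isGreatest_Icc hab) (isLeast_Icc hbc)⟩
  have hderiv : ∀ {u v}, IsAscentCurveOn V F O x (Icc u v) →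
      HasDerivWithinAt x (F (x t)) (Icc u v) t := fun {u v} h ↦ by
    by_cases ht : t ∈ Icc u v
    · exact h.isIntegralCurveOn t ht
    · exact HasFDerivWithinAt.of_notMem_closure (by rwa [isClosed_Icc.closure_eq])
  exact (hderiv h₁).union (hderiv h₂)

theorem append (hab : a ≤ b) (hbc : b ≤ c) (hx : IsAscentCurveOn V F O x (Icc a b))
    (hy : IsAscentCurveOn V F O y (Icc b c)) (hxy : x b = y b) :
    ∃ w, EqOn x w (Icc a b) ∧ IsAscentCurveOn V F O w (Icc a c) := by
  classical
  have hxw : EqOn x ((Iic b).piecewise x y) (Icc a b) := fun t ht ↦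
    (piecewise_eq_of_mem (Iic b) x y ht.2).symm
  have hyw : EqOn y ((Iic b).piecewise x y) (Icc b c) := fun t ht ↦ by
    rcases ht.1.eq_or_lt with rfl | hbt
    · rw [piecewise_eq_of_mem (Iic b) x y self_mem_Iic, hxy]
    · rw [piecewise_eq_of_notMem (Iic b) x y (notMem_Iic.2 hbt)]
  exact ⟨_, hxw, union_Icc hab hbc (hx.congr hxw) (hy.congr hyw)⟩

theorem Ico_of_forall_lt (hx : ∀ c < b, IsAscentCurveOn V F O x (Ico a c)) :
    IsAscentCurveOn V F O x (Ico a b) := by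
  have hmem : ∀ {t}, t ∈ Ico a b → ∃ c < b, t ∈ Ico a c := fun ht ↦
    have ⟨c, htc, hcb⟩ := exists_between ht.2
    ⟨c, hcb, ht.1, htc⟩
  refine ⟨fun t ht ↦ ?_, fun t ht ↦ ?_, fun t ht u hu htu ↦ ?_⟩
  · obtain ⟨c, hcb, hc⟩ := hmem ht
    exact (hx c hcb).mapsTo hc
  · obtain ⟨c, hcb, hc⟩ := hmem ht
    refine ((hx c hcb).isIntegralCurveOn t hc).mono_of_mem_nhdsWithin ?_
    exact mem_nhdsWithin.2 ⟨Iio c, isOpen_Iio, hc.2, fun τ hτ ↦ ⟨hτ.2.1, hτ.1⟩⟩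
  · obtain ⟨c, hcb, hc⟩ := hmem hu
    exact (hx c hcb).monotoneOn ⟨ht.1, htu.trans_lt hc.2⟩ hc htu

theorem Icc_of_Ico (hO : IsOpen O) (hV : ContinuousOn V O) (hF : ContinuousOn F O) (hab : a < b)
    (hx : IsAscentCurveOn V F O x (Ico a b)) (hcont : ContinuousWithinAt x (Iio b) b)
    (hb : x b ∈ O) : IsAscentCurveOn V F O x (Icc a b) := by
  have hFlim : Tendsto (fun t ↦ F (x t)) (𝓝[<] b) (𝓝 (F (x b))) :=
    (hF.continuousAt (hO.mem_nhds hb)).tendsto.comp hcont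
  have hVlim : Tendsto (fun t ↦ V (x t)) (𝓝[<] b) (𝓝 (V (x b))) :=
    (hV.continuousAt (hO.mem_nhds hb)).tendsto.comp hcont
  have hIoo : Ioo a b ∈ 𝓝[<] b := Ioo_mem_nhdsLT hab
  have hderiv : ∀ t ∈ Ioo a b, HasDerivAt x (F (x t)) t := fun t ht ↦
    (hx.isIntegralCurveOn t (Ioo_subset_Ico_self ht)).hasDerivAt (Ico_mem_nhds ht.1 ht.2)
  have hderiv_b : HasDerivWithinAt x (F (x b)) (Iic b) b :=
    hasDerivWithinAt_Iic_of_tendsto_deriv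
      (fun t ht ↦ (hderiv t ht).differentiableAt.differentiableWithinAt)
      (hcont.mono Ioo_subset_Iio_self) hIoo
      (hFlim.congr' (eventually_of_mem hIoo fun t ht ↦ (hderiv t ht).deriv.symm))
  have hVb : ∀ t ∈ Ico a b, V (x t) ≤ V (x b) := fun t ht ↦
    ge_of_tendsto hVlim (eventually_of_mem (Ioo_mem_nhdsLT ht.2) fun u hu ↦
      hx.monotoneOn ht ⟨ht.1.trans hu.1.le, hu.2⟩ hu.1.le)
  rw [← Ico_insert_right hab.le]
  refine ⟨fun t ht ↦ ?_, fun t ht ↦ ?_, ?_⟩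
  · exact ht.elim (fun h ↦ h ▸ hb) fun h ↦ hx.mapsTo h
  · rcases ht with rfl | ht
    · exact hderiv_b.mono (insert_subset self_mem_Iic fun τ hτ ↦ hτ.2.le)
    · refine (hx.isIntegralCurveOn t ht).mono_of_mem_nhdsWithin ?_
      exact mem_nhdsWithin.2 ⟨Iio b, isOpen_Iio, ht.2,
        fun τ hτ ↦ hτ.2.resolve_left (ne_of_lt hτ.1)⟩
  · exact (monotoneOn_insert_iff).2
      ⟨fun t ht _ ↦ hVb t ht, fun t ht hbt ↦ absurd ht.2 hbt.not_gt, hx.monotoneOn⟩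

end IsAscentCurveOn

section LocalExistence

variable [InnerProductSpace ℝ E] {V : E → ℝ} {F : E → E} {z : E} {r C M : ℝ}

theorem monotoneOn_of_tendsto_proxEulerNode {c h : ℕ → ℝ} {S : ℕ → E → E}
    (hs : ∀ n, IsProxEulerScheme V F z r C M (c n) (h n) (S n))
    (hasc : IsProxAscentOn V F (ball z (2 * r))) (hV : ContinuousOn V (closedBall z (2 * r)))
    (hc : Tendsto (fun n ↦ (c n)⁻¹) atTop (𝓝 0)) (hch : Tendsto (fun n ↦ c n * h n) atTop (𝓝 0))
    {x : ℝ → E} (hx : ∀ t ∈ Icc 0 (r / C),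
      Tendsto (fun n ↦ S n (proxEulerNode F (S n) z (h n) ⌊t / h n⌋₊)) atTop (𝓝 (x t))) :
    MonotoneOn (fun t ↦ V (x t)) (Icc 0 (r / C)) := by
  intro a ha b hb hab
  have hnode : ∀ n, proxEulerNode F (S n) z (h n) ⌊a / h n⌋₊ ∈ closedBall z r := fun n ↦
    (hs n).node_mem_closedBall (((hs n).natFloor_mul_le ha.1).trans ha.2)
  have hdist : Tendsto (fun n ↦ √(2 * M / c n)) atTop (𝓝 0) := by
    simpa [div_eq_mul_inv] using (hc.const_mul (2 * M)).sqrt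
  have hxa : Tendsto (fun n ↦ proxEulerNode F (S n) z (h n) ⌊a / h n⌋₊) atTop (𝓝 (x a)) := by
    simpa only [sub_sub_cancel, sub_zero] using (hx a ha).sub
      (squeeze_zero_norm (fun n ↦ (hs n).norm_comp_sub_le (hnode n)) hdist)
  have hVlim : ∀ {t : ℝ} {w : ℕ → E}, Tendsto w atTop (𝓝 (x t)) →
      (∀ n, w n ∈ closedBall z (2 * r)) → Tendsto (fun n ↦ V (w n)) atTop (𝓝 (V (x t))) :=
    fun hw hmem ↦ (hV _ (isClosed_closedBall.mem_of_tendsto hw (Eventually.of_forall hmem))).tendsto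
      |>.comp (tendsto_nhdsWithin_iff.2 ⟨hw, Eventually.of_forall hmem⟩)
  refine le_of_tendsto_of_tendsto' (b := atTop)
    (f := fun n ↦ V (proxEulerNode F (S n) z (h n) ⌊a / h n⌋₊) - c n * h n * r * C) ?_
    (hVlim (hx b hb) fun n ↦ ((hs n).isProxSelection _).1) fun n ↦ ?_
  · simpa using (hVlim hxa fun n ↦ (hs n).closedBall_subset (hnode n)).sub
      ((hch.mul_const r).mul_const C)
  · exact (hs n).le_comp_node hasc (Nat.floor_mono (div_le_div_of_nonneg_right hab
      (hs n).step_pos.le)) (((hs n).natFloor_mul_le hb.1).trans hb.2)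

theorem exists_isAscentCurveOn_closedBall [FiniteDimensional ℝ E] (hr : 0 < r) (hC : 0 < C)
    (hasc : IsProxAscentOn V F (ball z (2 * r)))
    (hV : ContinuousOn V (closedBall z (2 * r))) (hF : ContinuousOn F (closedBall z (2 * r)))
    (hM : ∀ x ∈ closedBall z (2 * r), |V x| ≤ M) (hFC : ∀ x ∈ closedBall z (2 * r), ‖F x‖ ≤ C) :
    ∃ x : ℝ → E, x 0 = z ∧ IsAscentCurveOn V F (closedBall z (2 * r)) x (Icc 0 (r / C)) := by
  have := FiniteDimensional.proper ℝ E
  obtain ⟨c, h, S, hs, hc, hh, hch⟩ := exists_isProxEulerScheme_seq hr hC hV hM hFC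
  have hnear : ∀ t ∈ Icc 0 (r / C), Tendsto (fun n ↦
      eulerPath z (h n) (F ∘ S n ∘ proxEulerNode F (S n) z (h n)) t -
        S n (proxEulerNode F (S n) z (h n) ⌊t / h n⌋₊)) atTop (𝓝 0) := fun t ht ↦ by
    refine squeeze_zero_norm (fun n ↦ (hs n).norm_eulerPath_sub_le ht) ?_
    simpa [div_eq_mul_inv] using (hh.const_mul C).add (hc.const_mul (2 * M)).sqrt
  obtain ⟨φ, hφ, x, hx₀, hlim, hx⟩ := exists_isIntegralCurveOn_of_tendsto_eulerPath_sub
    (isCompact_closedBall z (2 * r)) hF (fun n _ ↦ ((hs n).isProxSelection _).1) hnear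
  refine ⟨x, hx₀, fun t ht ↦ ?_, hx, ?_⟩
  · exact isClosed_closedBall.mem_of_tendsto (hlim t ht)
      (Eventually.of_forall fun n ↦ ((hs _).isProxSelection _).1)
  · exact monotoneOn_of_tendsto_proxEulerNode (fun n ↦ hs (φ n)) hasc hV
      (hc.comp hφ.tendsto_atTop) (hch.comp hφ.tendsto_atTop) hlim

end LocalExistence

theorem IsProxAscentOn.exists_isAscentCurveOn_Icc {E : Type*} [NormedAddCommGroup E]
    [InnerProductSpace ℝ E] [FiniteDimensional ℝ E] {V : E → ℝ} {F : E → E} {O : Set E}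
    (hasc : IsProxAscentOn V F O) (hO : IsOpen O) (hV : ContinuousOn V O) (hF : ContinuousOn F O)
    {z : E} (hz : z ∈ O) :
    ∃ δ > 0, ∃ x : ℝ → E, x 0 = z ∧ IsAscentCurveOn V F O x (Icc 0 δ) := by
  have := FiniteDimensional.proper ℝ E
  obtain ⟨R, hR, hRO⟩ := nhds_basis_closedBall.mem_iff.1 (hO.mem_nhds hz)
  obtain ⟨r, rfl⟩ : ∃ r, R = 2 * r := ⟨R / 2, by ring⟩
  have hr : 0 < r := by linarith
  have hB := isCompact_closedBall z (2 * r)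
  obtain ⟨M, hM⟩ := hB.exists_bound_of_continuousOn (hV.mono hRO)
  obtain ⟨C, hC⟩ := hB.exists_bound_of_continuousOn (hF.mono hRO)
  have hC₀ : 0 ≤ C := (norm_nonneg _).trans (hC z (mem_closedBall_self hR.le))
  obtain ⟨x, hx₀, hx⟩ := exists_isAscentCurveOn_closedBall (C := C + 1) hr (by positivity)
    (fun y hy ↦ hasc y (hRO (ball_subset_closedBall hy))) (hV.mono hRO) (hF.mono hRO) hM
    fun y hy ↦ (hC y hy).trans (by linarith)
  exact ⟨r / (C + 1), by positivity, x, hx₀, hx.mono Subset.rfl hRO⟩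

section Maximal

variable {E : Type*}

/-- The curve `q.2` on `[0, q.1)` extends the curve `p.2` on `[0, p.1)`. -/
def IsExtendedBy (p q : ℝ × (ℝ → E)) : Prop := p.1 ≤ q.1 ∧ EqOn p.2 q.2 (Ico 0 p.1)

theorem IsExtendedBy.trans {p q r : ℝ × (ℝ → E)} (hpq : IsExtendedBy p q)
    (hqr : IsExtendedBy q r) : IsExtendedBy p r :=
  ⟨hpq.1.trans hqr.1, hpq.2.trans (hqr.2.mono (Ico_subset_Ico_right hpq.1))⟩

theorem exists_eqOn_of_isChain_isExtendedBy {c : Set (ℝ × (ℝ → E))} (hc : IsChain IsExtendedBy c)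
    (hne : c.Nonempty) : ∃ x : ℝ → E, ∀ p ∈ c, EqOn p.2 x (Ico 0 p.1) := by
  obtain ⟨p₀, hp₀⟩ := hne
  have hchoice : ∀ t, ∃ q ∈ c, ∀ p ∈ c, t ∈ Ico 0 p.1 → p.2 t = q.2 t := fun t ↦ by
    by_cases h : ∃ q ∈ c, t ∈ Ico 0 q.1
    · obtain ⟨q, hq, htq⟩ := h
      refine ⟨q, hq, fun p hp htp ↦ ?_⟩
      rcases eq_or_ne p q with rfl | hpq
      · rfl
      · exact (hc hp hq hpq).elim (fun h ↦ h.2 htp) fun h ↦ (h.2 htq).symm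
    · exact ⟨p₀, hp₀, fun p hp htp ↦ absurd ⟨p, hp, htp⟩ h⟩
  choose q _ hqx using hchoice
  exact ⟨fun t ↦ (q t).2 t, fun p hp t ht ↦ hqx t p hp ht⟩

section Ascent

variable [NormedAddCommGroup E] [NormedSpace ℝ E] {V : E → ℝ} {F : E → E} {O : Set E} {z : E}

theorem exists_isExtendedBy_of_isChain {c : Set (ℝ × (ℝ → E))} (hc : IsChain IsExtendedBy c)
    (hne : c.Nonempty) (hbdd : BddAbove (Prod.fst '' c))
    (h : ∀ p ∈ c, 0 < p.1 ∧ p.2 0 = z ∧ IsAscentCurveOn V F O p.2 (Ico 0 p.1)) :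
    ∃ u, (0 < u.1 ∧ u.2 0 = z ∧ IsAscentCurveOn V F O u.2 (Ico 0 u.1)) ∧
      ∀ p ∈ c, IsExtendedBy p u := by
  obtain ⟨x, hx⟩ := exists_eqOn_of_isChain_isExtendedBy hc hne
  have hle : ∀ p ∈ c, p.1 ≤ sSup (Prod.fst '' c) := fun p hp ↦
    le_csSup hbdd (mem_image_of_mem _ hp)
  obtain ⟨p₀, hp₀⟩ := hne
  obtain ⟨hpos, hz, -⟩ := h p₀ hp₀
  refine ⟨(sSup (Prod.fst '' c), x), ⟨hpos.trans_le (hle p₀ hp₀), ?_, ?_⟩,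
    fun p hp ↦ ⟨hle p hp, hx p hp⟩⟩
  · exact (hx p₀ hp₀ ⟨le_rfl, hpos⟩).symm.trans hz
  · refine IsAscentCurveOn.Ico_of_forall_lt fun d hd ↦ ?_
    obtain ⟨-, ⟨p, hp, rfl⟩, hdp⟩ := exists_lt_of_lt_csSup ⟨_, mem_image_of_mem _ hp₀⟩ hd
    exact ((h p hp).2.2.congr (hx p hp)).mono (Ico_subset_Ico_right hdp.le) Subset.rfl

theorem exists_maximal_isAscentCurveOn {B : ℝ}
    (hex : ∃ b > 0, ∃ x : ℝ → E, x 0 = z ∧ IsAscentCurveOn V F O x (Ico 0 b))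
    (hB : ∀ b > 0, ∀ x : ℝ → E, x 0 = z → IsAscentCurveOn V F O x (Ico 0 b) → b ≤ B) :
    ∃ b > 0, ∃ x : ℝ → E, x 0 = z ∧ IsAscentCurveOn V F O x (Ico 0 b) ∧
      ∀ c ≥ b, ∀ y : ℝ → E, EqOn x y (Ico 0 b) → IsAscentCurveOn V F O y (Ico 0 c) → c ≤ b := by
  let P : Set (ℝ × (ℝ → E)) := {p | 0 < p.1 ∧ p.2 0 = z ∧ IsAscentCurveOn V F O p.2 (Ico 0 p.1)}
  obtain ⟨b₀, hb₀, x₀, hx₀⟩ := hex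
  have : Nonempty P := ⟨⟨(b₀, x₀), hb₀, hx₀⟩⟩
  obtain ⟨⟨⟨b, x⟩, hb, hxz, hx⟩, hmax⟩ := exists_maximal_of_nonempty_chains_bounded
    (r := fun p q : P ↦ IsExtendedBy p.1 q.1) (fun c hc hne ↦ by
      obtain ⟨u, hu, hcu⟩ := exists_isExtendedBy_of_isChain
        (hc.image_of_map_rel _ _ Subtype.val fun _ _ h ↦ h) (hne.image _)
        ⟨B, forall_mem_image.2 <| forall_mem_image.2 fun p _ ↦ hB _ p.2.1 _ p.2.2.1 p.2.2.2⟩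
        (forall_mem_image.2 fun p _ ↦ p.2)
      exact ⟨⟨u, hu⟩, fun p hp ↦ hcu p (mem_image_of_mem _ hp)⟩) fun hpq hqr ↦ hpq.trans hqr
  exact ⟨b, hb, x, hxz, hx, fun c hbc y hxy hy ↦
    (hmax ⟨(c, y), hb.trans_le hbc, (hxy ⟨le_rfl, hb⟩).symm.trans hxz, hy⟩ ⟨hbc, hxy⟩).1⟩

end Ascent

end Maximal

end AscentCurve

section Exit

variable {E : Type*} [NormedAddCommGroup E]

theorem exists_lipschitzOnWith_Ico_of_norm_deriv_le [NormedSpace ℝ E] {x v : ℝ → E} {a b K C : ℝ}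
    (hx : ∀ t ∈ Ico a b, HasDerivWithinAt x (v t) (Ico a b) t)
    (hv : ∀ t ∈ Ico a b, ‖v t‖ ≤ K * ‖x t‖ + C) : ∃ D, LipschitzOnWith D x (Ico a b) := by
  have hcont : Continuous (gronwallBound ‖x a‖ K C) :=
    continuous_iff_continuousAt.2 fun t ↦ (hasDerivAt_gronwallBound _ _ _ t).continuousAt
  obtain ⟨B, hB⟩ := (isCompact_Icc (a := 0) (b := b - a)).exists_bound_of_continuousOn
    hcont.continuousOn
  have hxB : ∀ t ∈ Ico a b, ‖x t‖ ≤ B := fun t ht ↦ by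
    have hsub : Icc a t ⊆ Ico a b := Icc_subset_Ico_right ht.2
    refine (norm_le_gronwallBound_of_norm_deriv_right_le
      (fun s hs ↦ (hx s (hsub hs)).continuousWithinAt.mono hsub) (fun s hs ↦ ?_) le_rfl
      (fun s hs ↦ hv s (hsub (Ico_subset_Icc_self hs))) t ⟨ht.1, le_rfl⟩).trans ?_
    · exact (hx s (hsub (Ico_subset_Icc_self hs))).mono_of_mem_nhdsWithin
        (mem_of_superset (Ico_mem_nhdsGE (hs.2.trans ht.2)) (Ico_subset_Ico_left hs.1))
    · exact (le_abs_self _).trans (hB _ ⟨sub_nonneg.2 ht.1, sub_le_sub_right ht.2.le a⟩)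
  refine ⟨(|K| * B + |C|).toNNReal,
    (convex_Ico a b).lipschitzOnWith_of_nnnorm_hasDerivWithin_le hx fun t ht ↦ ?_⟩
  refine NNReal.coe_le_coe.1 (((hv t ht).trans (add_le_add ?_ (le_abs_self C))).trans
    (Real.le_coe_toNNReal _))
  exact mul_le_mul (le_abs_self K) (hxB t ht) (norm_nonneg _) (abs_nonneg K)

variable [InnerProductSpace ℝ E] [FiniteDimensional ℝ E] {V : E → ℝ} {F : E → E} {O : Set E}
  {b : ℝ} {x : ℝ → E}

theorem IsProxAscentOn.exists_extension (hasc : IsProxAscentOn V F O) (hO : IsOpen O)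
    (hV : ContinuousOn V O) (hF : ContinuousOn F O) (hb : 0 < b)
    (hx : IsAscentCurveOn V F O x (Ico 0 b)) (hcont : ContinuousWithinAt x (Iio b) b)
    (hxb : x b ∈ O) : ∃ c > b, ∃ y, EqOn x y (Ico 0 b) ∧ IsAscentCurveOn V F O y (Ico 0 c) := by
  obtain ⟨δ, hδ, w, hw₀, hw⟩ := hasc.exists_isAscentCurveOn_Icc hO hV hF hxb
  obtain ⟨y, hxy, hy⟩ := (hx.Icc_of_Ico hO hV hF hb hcont hxb).append hb.le
    (le_add_of_nonneg_right hδ.le) (hw.comp_sub b) (by rw [sub_self, hw₀])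
  exact ⟨b + δ, lt_add_of_pos_right b hδ, y, hxy.mono Ico_subset_Icc_self,
    hy.mono Ico_subset_Icc_self Subset.rfl⟩

theorem IsProxAscentOn.exists_isAscentCurveOn_notMem (hasc : IsProxAscentOn V F O)
    (hO : IsOpen O) (hV : ContinuousOn V O) (hF : ContinuousOn F O) {z : E} (hz : z ∈ O) {B : ℝ}
    (hB : ∀ b > 0, ∀ x : ℝ → E, x 0 = z → IsAscentCurveOn V F O x (Ico 0 b) → b ≤ B)
    {K C : ℝ} (hgrow : ∀ y ∈ O, ‖F y‖ ≤ K * ‖y‖ + C) :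
    ∃ b > 0, ∃ x : ℝ → E, x 0 = z ∧ Continuous x ∧ IsAscentCurveOn V F O x (Ico 0 b) ∧
      x b ∉ O := by
  obtain ⟨δ, hδ, x₀, hx₀, hloc⟩ := hasc.exists_isAscentCurveOn_Icc hO hV hF hz
  obtain ⟨b, hb, x, hxz, hx, hmax⟩ := exists_maximal_isAscentCurveOn
    ⟨δ, hδ, x₀, hx₀, hloc.mono Ico_subset_Icc_self Subset.rfl⟩ hB
  obtain ⟨D, hD⟩ := exists_lipschitzOnWith_Ico_of_norm_deriv_le hx.isIntegralCurveOn
    fun t ht ↦ hgrow _ (hx.mapsTo ht)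
  obtain ⟨y, hy, hxy⟩ := hD.extend_finite_dimension
  have hyb := hx.congr hxy
  refine ⟨b, hb, y, (hxy ⟨le_rfl, hb⟩).symm.trans hxz, hy.continuous, hyb, fun hmem ↦ ?_⟩
  obtain ⟨c, hbc, w, hyw, hw⟩ := hasc.exists_extension hO hV hF hb hyb
    hy.continuous.continuousWithinAt hmem
  exact hbc.not_ge (hmax c hbc.le w (hxy.trans hyw) hw)

end Exit

section Lyapunov

variable {E : Type*} [NormedAddCommGroup E] {V U : E → ℝ} {F : E → E} {z : E}

theorem IsAscentCurveOn.antitoneOn_add_mul [NormedSpace ℝ E] {O : Set E} {x : ℝ → E} {b : ℝ}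
    (hx : IsAscentCurveOn V F O x (Ico 0 b)) (hUd : ∀ y ∈ O, DifferentiableAt ℝ U y)
    (hUF : ∀ y ∈ O, fderiv ℝ U y (F y) ≤ -V y) {s : Set ℝ} (hs : Convex ℝ s) (hsb : s ⊆ Icc 0 b)
    (hcont : ContinuousOn (fun t ↦ U (x t)) s) :
    AntitoneOn (fun t ↦ U (x t) + V (x 0) * t) s := by
  have hint : interior s ⊆ Ioo 0 b := (interior_mono hsb).trans interior_Icc.subset
  refine antitoneOn_of_hasDerivWithinAt_nonpos hs (hcont.add (by fun_prop))
    (f' := fun t ↦ fderiv ℝ U (x t) (F (x t)) + V (x 0)) (fun t ht ↦ ?_) fun t ht ↦ ?_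
  · have ht' : t ∈ Ico 0 b := Ioo_subset_Ico_self (hint ht)
    have hUx := (hUd _ (hx.mapsTo ht')).hasFDerivAt.comp_hasDerivWithinAt t
      (hx.isIntegralCurveOn t ht')
    exact (hUx.mono (hint.trans Ioo_subset_Ico_self)).add
      (by simpa using (hasDerivWithinAt_id t _).const_mul (V (x 0)))
  · have ht' : t ∈ Ico 0 b := Ioo_subset_Ico_self (hint ht)
    have hmono : V (x 0) ≤ V (x t) := hx.monotoneOn ⟨le_rfl, ht'.1.trans_lt ht'.2⟩ ht' ht'.1
    linarith [hUF _ (hx.mapsTo ht')]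

theorem IsAscentCurveOn.le_div [NormedSpace ℝ E] {O : Set E} {x : ℝ → E} {b : ℝ} (hb : 0 < b)
    (hx : IsAscentCurveOn V F O x (Ico 0 b)) (hUd : ∀ y ∈ O, DifferentiableAt ℝ U y)
    (hUF : ∀ y ∈ O, fderiv ℝ U y (F y) ≤ -V y) (hU : ∀ y ∈ O, 0 ≤ U y) (hV : 0 < V (x 0)) :
    b ≤ U (x 0) / V (x 0) := by
  have hcont : ContinuousOn (fun t ↦ U (x t)) (Ico 0 b) := fun t ht ↦
    (hUd _ (hx.mapsTo ht)).continuousAt.comp_continuousWithinAt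
      (hx.isIntegralCurveOn t ht).continuousWithinAt
  have hanti := hx.antitoneOn_add_mul hUd hUF (convex_Ico 0 b) Ico_subset_Icc_self hcont
  refine le_of_forall_lt_imp_le_of_dense fun t ht ↦ (le_max_left t 0).trans ?_
  have hmem : max t 0 ∈ Ico 0 b := ⟨le_max_right t 0, max_lt ht hb⟩
  have hle := hanti ⟨le_rfl, hb⟩ hmem hmem.1
  rw [le_div_iff₀ hV]
  linarith [hU _ (hx.mapsTo hmem)]

theorem strictAntiOn_of_antitoneOn_add_mul {g : ℝ → ℝ} {c : ℝ} {s : Set ℝ} (hc : 0 < c)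
    (hg : AntitoneOn (fun t ↦ g t + c * t) s) : StrictAntiOn g s := fun t ht u hu htu ↦ by
  linarith [hg ht hu htu.le, mul_lt_mul_of_pos_left htu hc]

theorem IsProxAscentOn.exists_isAscentCurveOn_frontier [InnerProductSpace ℝ E]
    [FiniteDimensional ℝ E] {D : Set E} (hD : IsOpen D)
    (hasc : IsProxAscentOn V F {y ∈ D | 0 < V y}) (hV : ContinuousOn V D)
    (hF : ContinuousOn F {y ∈ D | 0 < V y}) (hUc : ContinuousOn U (closure D))
    (hU : ∀ y ∈ D, 0 ≤ U y) (hUd : ∀ y ∈ D, DifferentiableAt ℝ U y)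
    (hUF : ∀ y ∈ D, 0 < V y → fderiv ℝ U y (F y) ≤ -V y) {K C : ℝ}
    (hgrow : ∀ y ∈ D, 0 < V y → ‖F y‖ ≤ K * ‖y‖ + C) (hz : z ∈ D) (hVz : 0 < V z) :
    ∃ b > 0, ∃ x : ℝ → E, x 0 = z ∧ Continuous x ∧
      IsAscentCurveOn V F {y ∈ D | 0 < V y} x (Ico 0 b) ∧ x b ∈ frontier D ∧
      b ≤ U z / V z ∧ AntitoneOn (fun t ↦ U (x t) + V z * t) (Icc 0 b) := by
  have hO : IsOpen {y ∈ D | 0 < V y} := hV.isOpen_inter_preimage hD isOpen_Ioi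
  have hlife : ∀ b > 0, ∀ x : ℝ → E, x 0 = z →
      IsAscentCurveOn V F {y ∈ D | 0 < V y} x (Ico 0 b) → b ≤ U z / V z := by
    rintro b hb x rfl hx
    exact hx.le_div hb (fun y hy ↦ hUd y hy.1) (fun y hy ↦ hUF y hy.1 hy.2) (fun y hy ↦ hU y hy.1)
      hVz
  obtain ⟨b, hb, x, rfl, hxc, hx, hxb⟩ := hasc.exists_isAscentCurveOn_notMem hO
    (hV.mono (sep_subset _ _)) hF ⟨hz, hVz⟩ hlife fun y hy ↦ hgrow y hy.1 hy.2
  have hcl : MapsTo x (Icc 0 b) (closure D) := by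
    rw [← closure_Ico hb.ne]
    exact MapsTo.closure (fun t ht ↦ (hx.mapsTo ht).1) hxc
  have hanti := hx.antitoneOn_add_mul (fun y hy ↦ hUd y hy.1) (fun y hy ↦ hUF y hy.1 hy.2)
    (convex_Icc 0 b) Subset.rfl (hUc.comp hxc.continuousOn hcl)
  refine ⟨b, hb, x, rfl, hxc, hx, ⟨hcl (right_mem_Icc.2 hb.le), fun hint ↦ ?_⟩,
    hlife b hb x rfl hx, hanti⟩
  have hxbD : x b ∈ D := interior_subset hint
  have hVlim : Tendsto (fun t ↦ V (x t)) (𝓝[<] b) (𝓝 (V (x b))) :=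
    (hV.continuousAt (hD.mem_nhds hxbD)).tendsto.comp (hxc.tendsto b |>.mono_left inf_le_left)
  have hVb : V (x 0) ≤ V (x b) := ge_of_tendsto hVlim <|
    eventually_of_mem (Ioo_mem_nhdsLT hb) fun t ht ↦
      hx.monotoneOn ⟨le_rfl, hb⟩ (Ioo_subset_Ico_self ht) ht.1.le
  exact hxb ⟨hxbD, hVz.trans_le hVb⟩

end Lyapunov

section MeasurableSelection

theorem exists_measurable_mem_of_isClosedEmbedding {Y K : Type*} [TopologicalSpace Y]
    [MeasurableSpace Y] [OpensMeasurableSpace Y] [TopologicalSpace K] [CompactSpace K]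
    [MeasurableSpace K] [BorelSpace K] {e : K → ℝ} (he : Topology.IsClosedEmbedding e)
    {R : Set (Y × K)} (hR : IsClosed R) (hne : ∀ y, ∃ k, (y, k) ∈ R) :
    ∃ σ : Y → K, Measurable σ ∧ ∀ y, (y, σ y) ∈ R := by
  -- Minimizing `e` makes the sublevel sets of the selection projections along `K` of closed sets.
  have hmin : ∀ y, ∃ k ∈ {k | (y, k) ∈ R}, IsMinOn e {k | (y, k) ∈ R} k := fun y ↦
    (hR.preimage (Continuous.prodMk_right y)).isCompact.exists_isMinOn (hne y)
      he.continuous.continuousOn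
  choose σ hσR hσmin using hmin
  refine ⟨σ, ?_, hσR⟩
  rw [← he.measurableEmbedding.measurable_comp_iff]
  refine measurable_of_Iic fun r ↦ ?_
  have hpre : e ∘ σ ⁻¹' Iic r = Prod.fst '' (R ∩ {q | e q.2 ≤ r}) := by
    ext y
    constructor
    · exact fun hy ↦ ⟨(y, σ y), ⟨hσR y, hy⟩, rfl⟩
    · rintro ⟨⟨y, k⟩, ⟨hk, hkr : e k ≤ r⟩, rfl⟩
      exact le_trans (hσmin y hk) hkr
  rw [hpre]
  exact (isClosedMap_fst_of_compactSpace _ (hR.inter (isClosed_le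
    (he.continuous.comp continuous_snd) continuous_const))).measurableSet

theorem exists_measurable_mem_of_isClosed {Y K : Type*} [TopologicalSpace Y] [MeasurableSpace Y]
    [OpensMeasurableSpace Y] [TopologicalSpace K] [CompactSpace K]
    [TopologicalSpace.MetrizableSpace K] [MeasurableSpace K] [BorelSpace K]
    {R : Set (Y × K)} (hR : IsClosed R) (hne : ∀ y, ∃ k, (y, k) ∈ R) :
    ∃ σ : Y → K, Measurable σ ∧ ∀ y, (y, σ y) ∈ R := by
  rcases isEmpty_or_nonempty Y with hY | ⟨⟨y₀⟩⟩
  · exact ⟨hY.elim, measurable_of_empty _, hY.elim⟩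
  have : Nonempty K := (hne y₀).nonempty
  let := TopologicalSpace.metrizableSpaceMetric K
  -- `K` is a continuous image of the Cantor set, which embeds into `ℝ`.
  have : CompactSpace cantorSet := isCompact_iff_compactSpace.1 isCompact_cantorSet
  obtain ⟨c, hc, hcsurj⟩ := exists_nat_bool_continuous_surjective_of_compact K
  let g : cantorSet → K := c ∘ cantorSetHomeomorphNatToBool
  have hg : Continuous g := hc.comp cantorSetHomeomorphNatToBool.continuous
  have hgsurj : Function.Surjective g := hcsurj.comp cantorSetHomeomorphNatToBool.surjective
  obtain ⟨σ, hσ, hσR⟩ := exists_measurable_mem_of_isClosedEmbedding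
    isCompact_cantorSet.isClosed.isClosedEmbedding_subtypeVal
    (hR.preimage (continuous_id.prodMap hg)) fun y ↦ by
      obtain ⟨k, hk⟩ := hne y
      obtain ⟨r, rfl⟩ := hgsurj k
      exact ⟨r, hk⟩
  exact ⟨g ∘ σ, hg.measurable.comp hσ, hσR⟩

theorem exists_measurable_eqOn_of_mem_image {Y X E : Type*} [TopologicalSpace Y] [MeasurableSpace Y]
    [OpensMeasurableSpace Y] [TopologicalSpace X] [TopologicalSpace.MetrizableSpace X]
    [MeasurableSpace X] [BorelSpace X] [TopologicalSpace E] [T2Space E] {s : Set Y}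
    {A : Set X} {g : Y → X → E} {v : Y → E} (hs : MeasurableSet s) (hA : IsCompact A)
    (hg : ContinuousOn (fun q : Y × X ↦ g q.1 q.2) (s ×ˢ A)) (hv : ContinuousOn v s)
    (hex : ∀ y ∈ s, v y ∈ g y '' A) {a₀ : X} (ha₀ : a₀ ∈ A) :
    ∃ a : Y → X, Measurable a ∧ (∀ y, a y ∈ A) ∧ EqOn (fun y ↦ g y (a y)) v s ∧
      EqOn a (fun _ ↦ a₀) sᶜ := by
  classical
  have : CompactSpace A := isCompact_iff_compactSpace.1 hA
  have hclosed : IsClosed {q : s × A | g q.1 q.2 = v q.1} :=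
    isClosed_eq (hg.comp_continuous (f := fun q : s × A ↦ ((q.1 : Y), (q.2 : X))) (by fun_prop)
      fun q ↦ ⟨q.1.2, q.2.2⟩) (hv.domRestrict.comp continuous_fst)
  obtain ⟨σ, hσ, hσv⟩ := exists_measurable_mem_of_isClosed hclosed fun y ↦
    have ⟨a, ha, hav⟩ := hex y y.2
    ⟨⟨a, ha⟩, hav⟩
  refine ⟨fun y ↦ if hy : y ∈ s then σ ⟨y, hy⟩ else a₀,
    Measurable.dite (measurable_subtype_coe.comp hσ) measurable_const hs, fun y ↦ ?_,
    fun y hy ↦ ?_, fun y hy ↦ dif_neg hy⟩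
  · dsimp only
    split_ifs with hy
    exacts [(σ ⟨y, hy⟩).2, ha₀]
  · dsimp only
    rw [dif_pos hy]
    exact hσv ⟨y, hy⟩

end MeasurableSelection

section StoppedCurve

variable {E : Type*} [NormedAddCommGroup E] [NormedSpace ℝ E] {x v : ℝ → E} {b : ℝ}

theorem hasDerivWithinAt_comp_min (hx : ∀ t ∈ Ico 0 b, HasDerivWithinAt x (v t) (Ico 0 b) t)
    {t : ℝ} (ht : 0 < t) :
    HasDerivWithinAt (fun τ ↦ x (min τ b)) ((Ico 0 b).indicator v t) (Ioi t) t := by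
  rcases lt_or_ge t b with htb | hbt
  · rw [indicator_of_mem (show t ∈ Ico 0 b from ⟨ht.le, htb⟩)]
    refine ((hx t ⟨ht.le, htb⟩).hasDerivAt (Ico_mem_nhds ht htb)).congr_of_eventuallyEq ?_
      |>.hasDerivWithinAt
    filter_upwards [Iio_mem_nhds htb] with τ hτ
    rw [min_eq_left hτ.le]
  · rw [indicator_of_notMem fun h ↦ h.2.not_ge hbt]
    exact (hasDerivWithinAt_const t (Ioi t) (x b)).congr
      (fun τ hτ ↦ by rw [min_eq_right (hbt.trans hτ.le)]) (by rw [min_eq_right hbt])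

theorem comp_min_eq_add_integral_indicator [CompleteSpace E] (hb : 0 ≤ b)
    (hxc : ContinuousOn x (Icc 0 b)) (hx : ∀ t ∈ Ico 0 b, HasDerivWithinAt x (v t) (Ico 0 b) t)
    (hv : IntegrableOn v (Ico 0 b)) {t : ℝ} (ht : 0 ≤ t) :
    x (min t b) = x 0 + ∫ s in 0..t, (Ico 0 b).indicator v s := by
  have hcont : ContinuousOn (fun τ ↦ x (min τ b)) (Icc 0 t) :=
    hxc.comp (by fun_prop) fun τ hτ ↦ ⟨le_min hτ.1 hb, min_le_right τ b⟩
  rw [intervalIntegral.integral_eq_sub_of_hasDeriv_right_of_le ht hcont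
    (fun τ hτ ↦ hasDerivWithinAt_comp_min hx hτ.1)
    (hv.integrable_indicator measurableSet_Ico).intervalIntegrable, min_eq_left hb,
    add_sub_cancel]

end StoppedCurve

theorem isAdmTraj_comp_min {n m : ℕ} {Ω : Set (EuclideanSpace ℝ (Fin n))}
    {A : Set (EuclideanSpace ℝ (Fin m))}
    {f : EuclideanSpace ℝ (Fin n) → EuclideanSpace ℝ (Fin m) → EuclideanSpace ℝ (Fin n)}
    (hA : IsCompact A) (hf : ContinuousOn (fun q : _ × _ ↦ f q.1 q.2) (Ω ×ˢ A))
    {x v : ℝ → EuclideanSpace ℝ (Fin n)} {b : ℝ} (hb : 0 ≤ b) (hxc : ContinuousOn x (Icc 0 b))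
    (hxΩ : MapsTo x (Icc 0 b) Ω) (hx : ∀ t ∈ Ico 0 b, HasDerivWithinAt x (v t) (Ico 0 b) t)
    (hv : ContinuousOn v (Ico 0 b)) (hvA : ∀ t ∈ Ico 0 b, v t ∈ f (x t) '' A)
    (h₀ : 0 ∈ f (x b) '' A) : IsAdmTraj A f (x 0) (fun t ↦ x (min t b)) := by
  have hfx : ContinuousOn (fun q : ℝ × _ ↦ f (x q.1) q.2) (Icc 0 b ×ˢ A) :=
    hf.comp ((hxc.comp continuousOn_fst fun q hq ↦ hq.1).prodMk continuousOn_snd)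
      fun q hq ↦ ⟨hxΩ hq.1, hq.2⟩
  obtain ⟨C, hC⟩ := (isCompact_Icc.prod hA).exists_bound_of_continuousOn hfx
  have hvint : IntegrableOn v (Ico 0 b) := by
    refine IntegrableOn.of_bound measure_Ico_lt_top (hv.aestronglyMeasurable measurableSet_Ico) C
      ((ae_restrict_iff' measurableSet_Ico).2 (ae_of_all _ fun t ht ↦ ?_))
    obtain ⟨a, ha, hav⟩ := hvA t ht
    exact hav ▸ hC (t, a) ⟨Ico_subset_Icc_self ht, ha⟩
  obtain ⟨a₀, ha₀, hfa₀⟩ := h₀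
  obtain ⟨a, ham, haA, hav, haa₀⟩ := exists_measurable_eqOn_of_mem_image (g := fun t ↦ f (x t))
    measurableSet_Ico hA (hfx.mono (prod_mono_left Ico_subset_Icc_self)) hv hvA ha₀
  have hfa : ∀ t, 0 ≤ t → f (x (min t b)) (a t) = (Ico 0 b).indicator v t := fun t ht ↦ by
    rcases lt_or_ge t b with htb | hbt
    · rw [min_eq_left htb.le, indicator_of_mem (show t ∈ Ico 0 b from ⟨ht, htb⟩)]
      exact hav ⟨ht, htb⟩
    · have htb : t ∉ Ico 0 b := fun h ↦ h.2.not_ge hbt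
      rw [min_eq_right hbt, indicator_of_notMem htb, haa₀ htb, hfa₀]
  refine ⟨congrArg x (min_eq_left hb),
    hxc.comp (by fun_prop) fun t ht ↦ ⟨le_min ht hb, min_le_right t b⟩, a, ham, haA, fun t ht ↦ ?_⟩
  refine (comp_min_eq_add_integral_indicator hb hxc hx hvint ht).trans <|
    congrArg (x 0 + ·) (intervalIntegral.integral_congr fun s hs ↦ (hfa s ?_).symm)
  exact (uIcc_of_le ht ▸ hs).1

theorem exists_norm_le_of_norm_sub_le {E X : Type*} [NormedAddCommGroup E] [TopologicalSpace X]
    {A : Set X} {f : E → X → E} {Ω : Set E} (hA : IsCompact A)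
    (hf : ContinuousOn (fun q : E × X ↦ f q.1 q.2) (Ω ×ˢ A)) {L : ℝ}
    (hL : ∀ a ∈ A, ∀ x ∈ Ω, ∀ y ∈ Ω, ‖f x a - f y a‖ ≤ L * ‖x - y‖) :
    ∃ K C, ∀ x ∈ Ω, ∀ a ∈ A, ‖f x a‖ ≤ K * ‖x‖ + C := by
  rcases Ω.eq_empty_or_nonempty with rfl | ⟨x₀, hx₀⟩
  · exact ⟨0, 0, fun x hx ↦ absurd hx (notMem_empty x)⟩
  obtain ⟨C, hC⟩ := hA.exists_bound_of_continuousOn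
    (hf.comp (f := fun a ↦ (x₀, a)) (by fun_prop) fun a ha ↦ ⟨hx₀, ha⟩)
  refine ⟨|L|, |L| * ‖x₀‖ + C, fun x hx a ha ↦ ?_⟩
  calc ‖f x a‖ ≤ ‖f x a - f x₀ a‖ + ‖f x₀ a‖ := norm_le_norm_sub_add _ _
    _ ≤ |L| * (‖x‖ + ‖x₀‖) + C := add_le_add ((hL a ha x hx x₀ hx₀).trans
      (mul_le_mul (le_abs_self L) (norm_sub_le x x₀) (norm_nonneg _) (abs_nonneg L))) (hC a ha)
    _ = |L| * ‖x‖ + (|L| * ‖x₀‖ + C) := by ring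

section Hamiltonian

variable {E X : Type*} [NormedAddCommGroup E] [InnerProductSpace ℝ E] {A : Set X} {f : E → X → E}
  {H : E → E → ℝ} {Ω : Set E}

/-- `H(x,p) = max_{a ∈ A} (-f(x,a) · p)` is the Hamiltonian of the control system `ẋ = f(x,a)`,
`a ∈ A`; the maximum is required to be attained. -/
def IsHamiltonian (A : Set X) (f : E → X → E) (H : E → E → ℝ) : Prop :=
  ∀ x p, IsGreatest ((fun a ↦ -⟪f x a, p⟫) '' A) (H x p)

namespace IsHamiltonian

theorem apply_zero (hH : IsHamiltonian A f H) (x : E) : H x 0 = 0 := by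
  obtain ⟨a, -, ha⟩ := (hH x 0).1
  simpa using ha.symm

theorem continuousOn [TopologicalSpace X] (hH : IsHamiltonian A f H) (hA : IsCompact A)
    (hf : ContinuousOn (fun q : E × X ↦ f q.1 q.2) (Ω ×ˢ A)) :
    ContinuousOn (fun q : E × E ↦ H q.1 q.2) (Ω ×ˢ univ) := by
  have : CompactSpace A := isCompact_iff_compactSpace.1 hA
  have hfc : Continuous fun q : (Ω ×ˢ univ : Set (E × E)) × A ↦ f q.1.1.1 q.2 :=
    hf.comp_continuous (f := fun q : (Ω ×ˢ univ : Set (E × E)) × A ↦ (q.1.1.1, (q.2 : X)))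
      (by fun_prop) fun q ↦ ⟨q.1.2.1, q.2.2⟩
  have hsup : Continuous fun q : (Ω ×ˢ univ : Set (E × E)) ↦
      sSup ((fun a : A ↦ -⟪f q.1.1 a, q.1.2⟫) '' univ) :=
    isCompact_univ.continuous_sSup (hfc.inner (by fun_prop)).neg
  refine continuousOn_iff_continuous_domRestrict.2 (hsup.congr fun q ↦ ?_)
  rw [image_univ, ← image_eq_range (fun a ↦ -⟪f q.1.1 a, q.1.2⟫) A]
  exact (hH _ _).csSup_eq

theorem eq_neg_of_hasGradientAt [CompleteSpace E] (hH : IsHamiltonian A f H) {x p q : E}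
    (hq : HasGradientAt (H x) q p) {a : X} (ha : a ∈ A) (hap : -⟪f x a, p⟫ = H x p) :
    f x a = -q := by
  have hmin : IsLocalMin (fun u ↦ H x u + ⟪f x a, u⟫) p := Eventually.of_forall fun u ↦ by
    linarith [(hH x u).2 ⟨a, ha, rfl⟩]
  have hderiv := hmin.hasFDerivAt_eq_zero (hq.hasFDerivAt.add (innerSL ℝ (f x a)).hasFDerivAt)
  refine eq_neg_of_add_eq_zero_right (ext_inner_right ℝ fun u ↦ ?_)
  simpa [inner_add_left] using congrArg (fun l ↦ l u) hderiv

theorem neg_mem_image [CompleteSpace E] (hH : IsHamiltonian A f H) {x p q : E}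
    (hq : HasGradientAt (H x) q p) : -q ∈ f x '' A := by
  obtain ⟨a, ha, hap⟩ := (hH x p).1
  exact ⟨a, ha, hH.eq_neg_of_hasGradientAt hq ha hap⟩

theorem inner_eq [CompleteSpace E] (hH : IsHamiltonian A f H) {x p q : E}
    (hq : HasGradientAt (H x) q p) : ⟪q, p⟫ = H x p := by
  obtain ⟨a, ha, hap : -⟪f x a, p⟫ = H x p⟩ := (hH x p).1
  rw [← hap, hH.eq_neg_of_hasGradientAt hq ha hap, inner_neg_left, neg_neg]

end IsHamiltonian

end Hamiltonian

section Gradient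

variable {E : Type*} [NormedAddCommGroup E] [InnerProductSpace ℝ E] [CompleteSpace E]

theorem continuousOn_prodMk_gradient {U : E → ℝ} {D : Set E} (hD : IsOpen D)
    (hU : ContDiffOn ℝ 1 U D) : ContinuousOn (fun x ↦ (x, gradient U x)) D :=
  continuousOn_id.prodMk <| (InnerProductSpace.toDual ℝ E).symm.continuous.comp_continuousOn
    (hU.continuousOn_fderiv_of_isOpen hD le_rfl)

theorem gradient_eq_zero_of_isLocalMin {U : E → ℝ} {x : E} (hx : IsLocalMin U x) :
    gradient U x = 0 := by
  rw [gradient, hx.fderiv_eq_zero, map_zero]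

theorem isProxAscentOn_of_isLocalMaxOn {V : E → ℝ} {F : E → E} {D : Set E}
    (hsub : ∀ φ : E → ℝ, ContDiff ℝ 1 φ → ∀ x ∈ D, 0 < V x →
      IsLocalMaxOn (fun y ↦ V y - φ y) D x → -⟪F x, gradient φ x⟫ ≤ 0) :
    IsProxAscentOn V F {x ∈ D | 0 < V x} := by
  rintro x ⟨hxD, hVx⟩ y c hc hmax
  have hgrad : HasFDerivAt (fun u ↦ c * ‖u - y‖ ^ 2) (c • (2 • innerSL ℝ (x - y))) x := by
    simpa using ((hasFDerivAt_id x).sub_const y).norm_sq.const_mul c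
  have hF := hsub (fun u ↦ c * ‖u - y‖ ^ 2)
    (contDiff_const.mul ((contDiff_id.sub contDiff_const).norm_sq ℝ)) x hxD hVx (hmax.on D)
  rw [real_inner_comm, inner_gradient_left, hgrad.fderiv, neg_nonpos] at hF
  have hF' : 0 ≤ c * (2 * ⟪x - y, F x⟫) := by simpa [inner_sub_left] using hF
  rw [real_inner_comm]
  linarith [nonneg_of_mul_nonneg_right hF' hc]

end Gradient

section ClosedLoop

variable {E X : Type*} [NormedAddCommGroup E] [InnerProductSpace ℝ E] {A : Set X} {f : E → X → E}
  {H : E → E → ℝ} {Hp : E → E → E} {U : E → ℝ}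

theorem continuousOn_feedback [CompleteSpace E] {D : Set E} (hD : IsOpen D)
    (hHp : ContinuousOn (fun q : E × E ↦ Hp q.1 q.2) {q | 0 < H q.1 q.2})
    (hU : ContDiffOn ℝ 1 U D) :
    ContinuousOn (fun x ↦ -(Hp x (gradient U x))) {x ∈ D | 0 < H x (gradient U x)} :=
  (hHp.comp ((continuousOn_prodMk_gradient hD hU).mono (sep_subset _ _)) fun _ hx ↦ hx.2).neg

namespace IsHamiltonian

theorem sdiff_inter_setOf_eq_zero [CompleteSpace E] (hH : IsHamiltonian A f H) {Ω T : Set E}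
    (hΩ : IsOpen Ω) (hUT : ∀ x ∈ T, U x = 0) (hU : ∀ x ∈ Ω \ T, 0 ≤ U x) :
    Ω \ (T ∩ {x | H x (gradient U x) = 0}) = Ω \ T := by
  ext x
  refine and_congr_right fun hxΩ ↦ not_congr (and_iff_left_of_imp fun hxT ↦ ?_)
  have hmin : IsLocalMin U x := by
    filter_upwards [hΩ.mem_nhds hxΩ] with y hy
    rw [hUT x hxT]
    by_cases hyT : y ∈ T
    exacts [(hUT y hyT).ge, hU y ⟨hy, hyT⟩]
  change H x (gradient U x) = 0
  rw [gradient_eq_zero_of_isLocalMin hmin, hH.apply_zero]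

theorem fderiv_neg [CompleteSpace E] (hH : IsHamiltonian A f H) {x q : E}
    (hq : HasGradientAt (H x) q (gradient U x)) : fderiv ℝ U x (-q) = -H x (gradient U x) := by
  rw [map_neg, ← inner_gradient_left, real_inner_comm, hH.inner_eq hq]

theorem exists_isAscentCurveOn_frontier [FiniteDimensional ℝ E] [TopologicalSpace X]
    (hH : IsHamiltonian A f H) (hA : IsCompact A) {D : Set E} (hD : IsOpen D)
    (hf : ContinuousOn (fun q : E × X ↦ f q.1 q.2) (D ×ˢ A)) {K C : ℝ}
    (hgrow : ∀ x ∈ D, ∀ a ∈ A, ‖f x a‖ ≤ K * ‖x‖ + C)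
    (hHp : ∀ x p, 0 < H x p → HasGradientAt (H x) (Hp x p) p)
    (hHpc : ContinuousOn (fun q : E × E ↦ Hp q.1 q.2) {q | 0 < H q.1 q.2})
    (hUc : ContinuousOn U (closure D)) (hU1 : ContDiffOn ℝ 1 U D) (hU : ∀ x ∈ D, 0 ≤ U x)
    (hsub : ∀ φ : E → ℝ, ContDiff ℝ 1 φ → ∀ x ∈ D, 0 < H x (gradient U x) →
      IsLocalMaxOn (fun y ↦ H y (gradient U y) - φ y) D x →
      -⟪-(Hp x (gradient U x)), gradient φ x⟫ ≤ 0)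
    {z : E} (hz : z ∈ D) (hHz : 0 < H z (gradient U z)) :
    ∃ b > 0, ∃ x : ℝ → E, x 0 = z ∧ Continuous x ∧
      IsAscentCurveOn (fun y ↦ H y (gradient U y)) (fun y ↦ -(Hp y (gradient U y)))
        {y ∈ D | 0 < H y (gradient U y)} x (Ico 0 b) ∧
      x b ∈ frontier D ∧ b ≤ U z / H z (gradient U z) ∧
      AntitoneOn (fun t ↦ U (x t) + H z (gradient U z) * t) (Icc 0 b) := by
  refine (isProxAscentOn_of_isLocalMaxOn hsub).exists_isAscentCurveOn_frontier (K := K) (C := C)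
    hD ?_ (continuousOn_feedback hD hHpc hU1) hUc hU
    (fun y hy ↦ (hU1.contDiffAt (hD.mem_nhds hy)).differentiableAt one_ne_zero)
    (fun y _ hHy ↦ (hH.fderiv_neg (hHp y _ hHy)).le) (fun y hy hHy ↦ ?_) hz hHz
  · exact (hH.continuousOn hA hf).comp (continuousOn_prodMk_gradient hD hU1) fun y hy ↦
      ⟨hy, mem_univ _⟩
  · obtain ⟨a, ha, hfa⟩ := hH.neg_mem_image (hHp y _ hHy)
    exact hfa ▸ hgrow y hy a ha

end IsHamiltonian

end ClosedLoop

section Reachability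

theorem mem_of_mem_frontier_sdiff {X : Type*} [TopologicalSpace X] {Ω T : Set X} (hΩ : IsOpen Ω)
    (hT : IsClosed T) {y : X} (hy : y ∈ frontier (Ω \ T)) (hyΩ : y ∉ frontier Ω) : y ∈ Ω ∩ T := by
  rw [(hΩ.sdiff hT).frontier_eq] at hy
  rw [hΩ.frontier_eq] at hyΩ
  have hmem : y ∈ Ω := not_not.1 fun h ↦ hyΩ ⟨closure_mono sdiff_subset hy.1, h⟩
  exact ⟨hmem, not_not.1 fun h ↦ hy.2 ⟨hmem, h⟩⟩

theorem zero_mem_of_convex_of_neg_mem {E : Type*} [AddCommGroup E] [Module ℝ E] {s : Set E}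
    (hs : Convex ℝ s) (hneg : ∀ v ∈ s, -v ∈ s) (hne : s.Nonempty) : (0 : E) ∈ s := by
  obtain ⟨v, hv⟩ := hne
  simpa using hs.midpoint_mem hv (hneg v hv)

theorem mem_reachTimes_of_hasDerivWithinAt {n m : ℕ} {Ω T : Set (EuclideanSpace ℝ (Fin n))}
    {A : Set (EuclideanSpace ℝ (Fin m))}
    {f : EuclideanSpace ℝ (Fin n) → EuclideanSpace ℝ (Fin m) → EuclideanSpace ℝ (Fin n)}
    (hA : IsCompact A) (hf : ContinuousOn (fun q : _ × _ ↦ f q.1 q.2) (Ω ×ˢ A))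
    {x v : ℝ → EuclideanSpace ℝ (Fin n)} {b : ℝ} (hb : 0 ≤ b) (hxc : ContinuousOn x (Icc 0 b))
    (hxΩ : MapsTo x (Icc 0 b) Ω) (hx : ∀ t ∈ Ico 0 b, HasDerivWithinAt x (v t) (Ico 0 b) t)
    (hv : ContinuousOn v (Ico 0 b)) (hvA : ∀ t ∈ Ico 0 b, v t ∈ f (x t) '' A)
    (h₀ : 0 ∈ f (x b) '' A) (hxT : x b ∈ T) : b ∈ reachTimes Ω T A f (x 0) :=
  ⟨hb, fun t ↦ x (min t b), isAdmTraj_comp_min hA hf hb hxc hxΩ hx hv hvA h₀,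
    fun t ht ↦ by simpa only [min_eq_left ht.2] using hxΩ ht, by simpa only [min_self] using hxT⟩

end Reachability

theorem stmt_7_general {n m : ℕ} {Ω : Set (EuclideanSpace ℝ (Fin n))} (hΩo : IsOpen Ω)
    {T : Set (EuclideanSpace ℝ (Fin n))} (hT : IsClosed T) {A : Set (EuclideanSpace ℝ (Fin m))}
    (hA : IsCompact A)
    {f : EuclideanSpace ℝ (Fin n) → EuclideanSpace ℝ (Fin m) → EuclideanSpace ℝ (Fin n)}
    (hf : ContinuousOn (fun q : _ × _ ↦ f q.1 q.2) (Ω ×ˢ A)) {K C : ℝ}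
    (hgrow : ∀ x ∈ Ω, ∀ a ∈ A, ‖f x a‖ ≤ K * ‖x‖ + C) (hrest : ∀ x ∈ Ω ∩ T, 0 ∈ f x '' A)
    {H : EuclideanSpace ℝ (Fin n) → EuclideanSpace ℝ (Fin n) → ℝ} (hH : IsHamiltonian A f H)
    {Hp : EuclideanSpace ℝ (Fin n) → EuclideanSpace ℝ (Fin n) → EuclideanSpace ℝ (Fin n)}
    (hHp : ∀ x p, 0 < H x p → HasGradientAt (H x) (Hp x p) p)
    (hHpc : ContinuousOn (fun q : _ × _ ↦ Hp q.1 q.2) {q | 0 < H q.1 q.2})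
    {U : EuclideanSpace ℝ (Fin n) → ℝ} {M : ℝ} (hUc : ContinuousOn U (closure (Ω \ T)))
    (hU1 : ContDiffOn ℝ 1 U (Ω \ T)) (hUfr : ∀ x ∈ frontier Ω, U x = M)
    (hUΩ : ∀ x ∈ Ω \ T, 0 ≤ U x ∧ U x < M)
    (hsub : ∀ φ : EuclideanSpace ℝ (Fin n) → ℝ, ContDiff ℝ 1 φ →
      ∀ x₀ ∈ Ω \ T, 0 < H x₀ (gradient U x₀) →
      IsLocalMaxOn (fun x ↦ H x (gradient U x) - φ x) (Ω \ T) x₀ →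
      -⟪-(Hp x₀ (gradient U x₀)), gradient φ x₀⟫ ≤ 0) :
    ∀ x₀ ∈ Ω, x₀ ∉ T → 0 < H x₀ (gradient U x₀) →
      ∃ tbar : ℝ, 0 ≤ tbar ∧ tbar ≤ U x₀ / H x₀ (gradient U x₀) ∧
        ∃ x : ℝ → EuclideanSpace ℝ (Fin n), x 0 = x₀ ∧
          (∀ t ∈ Ico (0 : ℝ) tbar, x t ∈ Ω \ T) ∧
          (∀ t ∈ Icc (0 : ℝ) tbar, x t ∈ closure Ω) ∧
          (∀ t ∈ Ico (0 : ℝ) tbar,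
            HasDerivWithinAt x (-(Hp (x t) (gradient U (x t)))) (Ico (0 : ℝ) tbar) t) ∧
          MonotoneOn (fun t ↦ H (x t) (gradient U (x t))) (Ico (0 : ℝ) tbar) ∧
          StrictAntiOn (fun t ↦ U (x t)) (Icc (0 : ℝ) tbar) ∧
          x tbar ∈ T ∧
          (reachTimes Ω T A f x₀).Nonempty ∧
          sInf (reachTimes Ω T A f x₀) ≤ U x₀ / H x₀ (gradient U x₀) := by
  intro x₀ hx₀Ω hx₀T hHx₀
  have hD : IsOpen (Ω \ T) := hΩo.sdiff hT
  obtain ⟨b, hb, x, rfl, hxc, hx, hxb, hbU, hanti⟩ := hH.exists_isAscentCurveOn_frontier hA hD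
    (hf.mono (prod_mono_left sdiff_subset)) (fun y hy ↦ hgrow y hy.1) hHp hHpc hUc hU1
    (fun y hy ↦ (hUΩ y hy).1) hsub ⟨hx₀Ω, hx₀T⟩ hHx₀
  have hdecr := strictAntiOn_of_antitoneOn_add_mul hHx₀ hanti
  have hUb : U (x b) < M := (hdecr (left_mem_Icc.2 hb.le) (right_mem_Icc.2 hb.le) hb).trans
    (hUΩ _ ⟨hx₀Ω, hx₀T⟩).2
  have hxbT : x b ∈ Ω ∩ T := mem_of_mem_frontier_sdiff hΩo hT hxb fun h ↦ hUb.ne (hUfr _ h)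
  have hxΩ : MapsTo x (Icc 0 b) Ω := fun t ht ↦ by
    rcases ht.2.eq_or_lt with rfl | htb
    exacts [hxbT.1, (hx.mapsTo ⟨ht.1, htb⟩).1.1]
  have hreach : b ∈ reachTimes Ω T A f (x 0) :=
    mem_reachTimes_of_hasDerivWithinAt hA hf hb.le hxc.continuousOn hxΩ hx.isIntegralCurveOn
      ((continuousOn_feedback hD hHpc hU1).comp hxc.continuousOn hx.mapsTo)
      (fun t ht ↦ hH.neg_mem_image (hHp _ _ (hx.mapsTo ht).2)) (hrest _ hxbT) hxbT.2
  exact ⟨b, hb.le, hbU, x, rfl, fun t ht ↦ (hx.mapsTo ht).1, fun t ht ↦ subset_closure (hxΩ ht),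
    hx.isIntegralCurveOn, hx.monotoneOn, hdecr, hxbT.2, ⟨b, hreach⟩,
    (csInf_le ⟨0, fun t ht ↦ ht.1⟩ hreach).trans hbU⟩

/-- from a `C¹`-supersolution of the Aronsson equation one builds a
closed-loop trajectory along which the Hamiltonian is nondecreasing, `U` is strictly
decreasing, which reaches the target in time at most `U(x₀)/H(x₀,∇U(x₀))`; hence the
minimum time function satisfies `T(x₀) ≤ U(x₀)/H(x₀,∇U(x₀))`. -/
theorem stmt_7 {n m : ℕ} (Ω : Set (EuclideanSpace ℝ (Fin n))) (hΩo : IsOpen Ω)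
    (T : Set (EuclideanSpace ℝ (Fin n))) (hT : IsClosed T) (hTΩ : T ⊆ Ω)
    (A : Set (EuclideanSpace ℝ (Fin m))) (hA : A.Nonempty) (hAc : IsCompact A)
    (f : EuclideanSpace ℝ (Fin n) → EuclideanSpace ℝ (Fin m) → EuclideanSpace ℝ (Fin n))
    (hfc : ContinuousOn (fun q : EuclideanSpace ℝ (Fin n) × EuclideanSpace ℝ (Fin m) =>
      f q.1 q.2) (Ω ×ˢ A))
    (L : ℝ) (hLip : ∀ a ∈ A, ∀ x ∈ Ω, ∀ y ∈ Ω, ‖f x a - f y a‖ ≤ L * ‖x - y‖)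
    (hconv : ∀ x ∈ Ω, Convex ℝ (f x '' A))
    (hsymm : ∀ x ∈ Ω, ∀ a ∈ A, ∃ a' ∈ A, f x a' = -f x a)
    (H : EuclideanSpace ℝ (Fin n) → EuclideanSpace ℝ (Fin n) → ℝ)
    (hH : ∀ x p, IsGreatest ((fun a => -⟪f x a, p⟫) '' A) (H x p))
    (Hp : EuclideanSpace ℝ (Fin n) → EuclideanSpace ℝ (Fin n) → EuclideanSpace ℝ (Fin n))
    (hHp : ∀ x p, 0 < H x p → HasGradientAt (H x) (Hp x p) p)
    (hHpc : ContinuousOn (fun q : EuclideanSpace ℝ (Fin n) × EuclideanSpace ℝ (Fin n) =>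
      Hp q.1 q.2) {q | 0 < H q.1 q.2})
    (U : EuclideanSpace ℝ (Fin n) → ℝ) (M : ℝ) (hM : 0 < M)
    (hUc : ContinuousOn U (closure (Ω \ T)))
    (hU1 : ContDiffOn ℝ 1 U (Ω \ (T ∩ {x | H x (gradient U x) = 0})))
    (hUnn : ∀ x ∈ closure (Ω \ T), 0 ≤ U x)
    (hUT : ∀ x ∈ T, U x = 0) (hUfr : ∀ x ∈ frontier Ω, U x = M)
    (hUΩ : ∀ x ∈ Ω \ T, 0 < U x ∧ U x < M)
    -- `U` is a `C¹`-supersolution of the Aronsson equation on `Ω \ (T ∩ ℋ)`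
    (hsub : ∀ φ : EuclideanSpace ℝ (Fin n) → ℝ, ContDiff ℝ 1 φ →
      ∀ x₀ ∈ Ω \ (T ∩ {x | H x (gradient U x) = 0}), 0 < H x₀ (gradient U x₀) →
      IsLocalMaxOn (fun x => H x (gradient U x) - φ x)
        (Ω \ (T ∩ {x | H x (gradient U x) = 0})) x₀ →
      -⟪-(Hp x₀ (gradient U x₀)), gradient φ x₀⟫ ≤ 0)
    (hsup : ∀ φ : EuclideanSpace ℝ (Fin n) → ℝ, ContDiff ℝ 1 φ →
      ∀ x₀ ∈ Ω \ (T ∩ {x | H x (gradient U x) = 0}), 0 < H x₀ (gradient U x₀) →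
      IsLocalMinOn (fun x => H x (gradient U x) - φ x)
        (Ω \ (T ∩ {x | H x (gradient U x) = 0})) x₀ →
      0 ≤ ⟪-(Hp x₀ (gradient U x₀)), gradient φ x₀⟫) :
    ∀ x₀ ∈ Ω, x₀ ∉ T → 0 < H x₀ (gradient U x₀) →
      ∃ tbar : ℝ, 0 ≤ tbar ∧ tbar ≤ U x₀ / H x₀ (gradient U x₀) ∧
        ∃ x : ℝ → EuclideanSpace ℝ (Fin n), x 0 = x₀ ∧
          (∀ t ∈ Ico (0:ℝ) tbar, x t ∈ Ω \ T) ∧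
          (∀ t ∈ Icc (0:ℝ) tbar, x t ∈ closure Ω) ∧
          (∀ t ∈ Ico (0:ℝ) tbar,
            HasDerivWithinAt x (-(Hp (x t) (gradient U (x t)))) (Ico (0:ℝ) tbar) t) ∧
          -- (i) the Hamiltonian is nondecreasing along the trajectory
          MonotoneOn (fun t => H (x t) (gradient U (x t))) (Ico (0:ℝ) tbar) ∧
          -- (ii) `U` is strictly decreasing along the trajectory
          StrictAntiOn (fun t => U (x t)) (Icc (0:ℝ) tbar) ∧
          -- (iii) the target is reached at time `tbar` and the minimum time
          -- function satisfies the announced bound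
          x tbar ∈ T ∧
          (reachTimes Ω T A f x₀).Nonempty ∧
          sInf (reachTimes Ω T A f x₀) ≤ U x₀ / H x₀ (gradient U x₀) := by
  rw [IsHamiltonian.sdiff_inter_setOf_eq_zero hH hΩo hUT fun x hx ↦ (hUΩ x hx).1.le] at hU1 hsub
  obtain ⟨K, C, hgrow⟩ := exists_norm_le_of_norm_sub_le hAc hfc hLip
  exact stmt_7_general hΩo hT hAc hfc hgrow
    (fun x hx ↦ zero_mem_of_convex_of_neg_mem (hconv x hx.1)
      (forall_mem_image.2 (hsymm x hx.1)) (hA.image _))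
    hH hHp hHpc hUc hU1 hUfr (fun x hx ↦ ⟨(hUΩ x hx).1.le, (hUΩ x hx).2⟩) hsub
end
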